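/- Let R be a commutative Noetherian ring and let C be a semidualizing R-module. The following are equivalent: (i) C is pointwise dualizing; (ii) for every cotorsion R-module M with C-id_R(M) = n < ∞ and every prime ideal p of R, π_i(p, M) = 0 for all i ≥ 0 with ht(p) ∉ {i, i+1, ..., i+n}. -/

import Mathlib

/-!
The proof reduces both conditions to one statement about `Ext`: for every prime `p`,

  (*) `Ext^i_R(R/p, C)_p = 0` for all `i ≠ ht p`.

**Homological translation.** Writing `X^∨` for the character module,
`Tor_i(X, Y) = 0` if and only if `Ext^i(Y, X^∨) = 0`, and flat base change along `R → R_p` gives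
`π_i(p, M) = 0 ↔ Ext^i_R(Hom(R_p, M), (R/p)^∨) = 0` (`dualBass_eq_zero_iff`). For an injective
module `J` and a finitely generated module `N`, `Tor_i(Hom(C, J), N)` is `Hom(Ext^i(N, C), J)`
up to vanishing (`tor_hom_iff`). With `J = Hom(R_p, I)`, this computes the dual Bass numbers of
`Hom(C, I)`, for `I` injective, in terms of the modules in (*).

**Pointwise dualizing implies the window.** If `C_m` has finite injective dimension at a maximal
ideal `m ⊇ p`, then `Ext^i(R/p, C)_p = 0` for large `i`. A semidualizing module always has
`Ext^{ht q}(R/q, C)_q ≠ 0` (`SD.not_LV_height`), and `SD.LV_of_ne` shows that the top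
nonvanishing degree is `ht q` and that nothing survives below it; so (*) holds. If `C ⊗ M` has
injective dimension `n`, then `M ≅ Hom(C, C ⊗ M)` (`SD.auslander`, Foxby equivalence).
Apply `Hom(R_p, Hom(C, -))` to the start of an injective resolution of `C ⊗ M`: exactness is kept
because `C ⊗ M` lies in the Bass class and `M` is cotorsion. Induction on `n` then spreads the
single degree `ht p`, valid for `n = 0`, to the window `ht p ∈ {i, …, i + n}` (`SD.window`).

**The window implies pointwise dualizing.** The module `Hom(C, R^∨)` is cotorsion and has
`C`-injective dimension `0`. Since `R^∨` is a cogenerator, the hypothesis for this single module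
gives (*) at every prime (`LV.of_dualBass`). At a maximal ideal `m` dévissage extends the vanishing
above `ht m` to all finitely generated modules (`LV.bounded`), and Baer's criterion over `R_m`
turns it into finite injective dimension of `C_m` (`IdLE.loc`).
-/

open CategoryTheory

universe u

noncomputable section

variable (R : Type u) [CommRing R]

/-- The Ext module `Ext^i_R(M, N)`, via the derived functor definition. -/
noncomputable def extM (M N : Type u) [AddCommGroup M] [Module R M]
    [AddCommGroup N] [Module R N] (i : ℕ) : ModuleCat R :=
  ((Ext R (ModuleCat.{u} R) i).obj (Opposite.op (ModuleCat.of R M))).obj (ModuleCat.of R N)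

/-- The Tor module `Tor_i^R(M, N)`, via the derived functor definition. -/
noncomputable def torM (M N : Type u) [AddCommGroup M] [Module R M]
    [AddCommGroup N] [Module R N] (i : ℕ) : ModuleCat R :=
  ((Tor (ModuleCat.{u} R) i).obj (ModuleCat.of R M)).obj (ModuleCat.of R N)

/-- `C` is a semidualizing `R`-module: it is finitely generated, the homothety map
`R → Hom_R(C,C)` is bijective, and `Ext^i_R(C,C) = 0` for all `i > 0`. -/
def IsSemidualizing (C : Type u) [AddCommGroup C] [Module R C] : Prop :=
  Module.Finite R C ∧
  Function.Bijective (fun r : R => r • (LinearMap.id : C →ₗ[R] C)) ∧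
  ∀ i : ℕ, 0 < i → Subsingleton (extM R C C i)

/-- Injective dimension of a module, characterized via vanishing of Ext. -/
noncomputable def injDim (M : Type u) [AddCommGroup M] [Module R M] : ℕ∞ :=
  sInf {n : ℕ∞ | ∀ (N : Type u) (_ : AddCommGroup N) (_ : Module R N) (i : ℕ),
    n < i → Subsingleton (extM R N M i)}

/-- Flat dimension of a module, characterized via vanishing of Tor. -/
noncomputable def flatDim (M : Type u) [AddCommGroup M] [Module R M] : ℕ∞ :=
  sInf {n : ℕ∞ | ∀ (N : Type u) (_ : AddCommGroup N) (_ : Module R N) (i : ℕ),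
    n < i → Subsingleton (torM R N M i)}

/-- The length of a module, as the height of `⊤` in its submodule lattice. -/
noncomputable def mLength (M : Type u) [AddCommGroup M] [Module R M] : ℕ∞ :=
  Order.height (⊤ : Submodule R M)

/-- Depth of a module over a local ring: the least `i` with `Ext^i(k, M) ≠ 0`. -/
noncomputable def depth [IsLocalRing R] (M : Type u) [AddCommGroup M] [Module R M] : ℕ∞ :=
  sInf {n : ℕ∞ | ∃ i : ℕ, n = i ∧ Nontrivial (extM R (IsLocalRing.ResidueField R) M i)}

/-- Depth, as a natural number. -/
noncomputable def depthNat [IsLocalRing R] (M : Type u) [AddCommGroup M] [Module R M] : ℕ :=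
  sInf {i : ℕ | Nontrivial (extM R (IsLocalRing.ResidueField R) M i)}

/-- The type of a module: `r_R(M) = dim_k Ext^t_R(k, M)` where `t = depth_R(M)`. -/
noncomputable def rtype [IsLocalRing R] (M : Type u) [AddCommGroup M] [Module R M] : ℕ∞ :=
  mLength R (extM R (IsLocalRing.ResidueField R) M (depthNat R M))

/-- A dualizing module: a semidualizing module of finite injective dimension. -/
def IsDualizing (C : Type u) [AddCommGroup C] [Module R C] : Prop :=
  IsSemidualizing R C ∧ injDim R C < ⊤

/-- A pointwise dualizing module: the localization at every maximal ideal is dualizing. -/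
def IsPointwiseDualizing (C : Type u) [AddCommGroup C] [Module R C] : Prop :=
  IsSemidualizing R C ∧ ∀ (p : Ideal R) [p.IsPrime], p.IsMaximal →
    IsDualizing (Localization.AtPrime p) (LocalizedModule p.primeCompl C)

/-- Height of a prime ideal. -/
noncomputable def primeHeight (p : Ideal R) [hp : p.IsPrime] : ℕ∞ :=
  Order.height (⟨p, hp⟩ : PrimeSpectrum R)

/-- A totally `C`-reflexive module. -/
def IsTotallyCReflexive (C M : Type u) [AddCommGroup C] [Module R C]
    [AddCommGroup M] [Module R M] : Prop :=
  Module.Finite R M ∧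
  Function.Bijective ((LinearMap.id : (M →ₗ[R] C) →ₗ[R] (M →ₗ[R] C)).flip) ∧
  ∀ i : ℕ, 0 < i →
    Subsingleton (extM R M C i) ∧ Subsingleton (extM R (M →ₗ[R] C) C i)

/-- `G_C`-dimension of `M` is at most `n`. -/
def gcDimLE (C : Type u) [AddCommGroup C] [Module R C] :
    ℕ → (M : Type u) → [AddCommGroup M] → [Module R M] → Prop
  | 0, M, _, _ => IsTotallyCReflexive R C M
  | n+1, M, _, _ => ∃ (G K : Type u) (_ : AddCommGroup G) (_ : Module R G)
      (_ : AddCommGroup K) (_ : Module R K) (f : K →ₗ[R] G) (g : G →ₗ[R] M),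
      IsTotallyCReflexive R C G ∧ Function.Injective f ∧ Function.Surjective g ∧
      LinearMap.range f = LinearMap.ker g ∧ gcDimLE C n K

/-- `M` has finite `G_C`-dimension. -/
def HasFiniteGCDim (C M : Type u) [AddCommGroup C] [Module R C]
    [AddCommGroup M] [Module R M] : Prop :=
  ∃ n : ℕ, gcDimLE R C n M

/-- A finitely generated module over a local ring is Cohen-Macaulay if its depth
equals its Krull dimension. -/
def IsCohenMacaulayModule [IsLocalRing R] (M : Type u) [AddCommGroup M] [Module R M] : Prop :=
  Module.Finite R M ∧ (depth R M : WithBot ℕ∞) = Order.krullDim (Module.support R M)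

/-- The `S`-module structure on `Hom_R(S, M)` through the domain, for an `R`-algebra `S`. -/
instance homDomModule (S : Type u) [CommRing S] [Algebra R S]
    (M : Type u) [AddCommGroup M] [Module R M] : Module S (S →ₗ[R] M) where
  smul s f := f.comp (LinearMap.mul R S s)
  one_smul f := by ext x; show f (1 * x) = f x; rw [one_mul]
  mul_smul s t f := by ext x; show f (s * t * x) = f (t * (s * x)); ring_nf
  smul_zero s := by ext x; rfl
  smul_add s f g := by ext x; rfl
  add_smul s t f := by
    ext x; show f ((s + t) * x) = f (s * x) + f (t * x); rw [add_mul, map_add]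
  zero_smul f := by ext x; show f (0 * x) = 0; rw [zero_mul, map_zero]

/-- The Bass number `μ^i(p, M) = dim_{k(p)} Ext^i_{R_p}(k(p), M_p)`. -/
noncomputable def bassNumber (p : Ideal R) [p.IsPrime] (i : ℕ)
    (M : Type u) [AddCommGroup M] [Module R M] : ℕ∞ :=
  mLength (Localization.AtPrime p)
    (extM (Localization.AtPrime p) (IsLocalRing.ResidueField (Localization.AtPrime p))
      (LocalizedModule p.primeCompl M) i)

/-- The dual Bass number `π_i(p, M) = dim_{k(p)} Tor_i^{R_p}(k(p), Hom_R(R_p, M))`. -/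
noncomputable def dualBassNumber (p : Ideal R) [p.IsPrime] (i : ℕ)
    (M : Type u) [AddCommGroup M] [Module R M] : ℕ∞ :=
  mLength (Localization.AtPrime p)
    (torM (Localization.AtPrime p) (IsLocalRing.ResidueField (Localization.AtPrime p))
      (Localization.AtPrime p →ₗ[R] M) i)

/-- A cotorsion module: `Ext^1_R(F, M) = 0` for every flat module `F`. -/
def IsCotorsion (M : Type u) [AddCommGroup M] [Module R M] : Prop :=
  ∀ (F : Type u) (_ : AddCommGroup F) (_ : Module R F), Module.Flat R F →
    Subsingleton (extM R F M 1)

/-- A `C`-flat module: one isomorphic to `C ⊗_R F` with `F` flat. -/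
def IsCFlat (C M : Type u) [AddCommGroup C] [Module R C] [AddCommGroup M] [Module R M] : Prop :=
  ∃ (F : Type u) (_ : AddCommGroup F) (_ : Module R F), Module.Flat R F ∧
    Nonempty (M ≃ₗ[R] TensorProduct R C F)

/-- A `C`-injective module: one isomorphic to `Hom_R(C, I)` with `I` injective. -/
def IsCInjective (C M : Type u) [AddCommGroup C] [Module R C]
    [AddCommGroup M] [Module R M] : Prop :=
  ∃ (I : Type u) (_ : AddCommGroup I) (_ : Module R I), Module.Injective R I ∧
    Nonempty (M ≃ₗ[R] (C →ₗ[R] I))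

/-- `φ : F → M` is a flat cover of `M`. -/
def IsFlatCover (M F : Type u) [AddCommGroup M] [Module R M] [AddCommGroup F] [Module R F]
    (φ : F →ₗ[R] M) : Prop :=
  Module.Flat R F ∧
  (∀ (G : Type u) (_ : AddCommGroup G) (_ : Module R G), Module.Flat R G →
    ∀ ψ : G →ₗ[R] M, ∃ h : G →ₗ[R] F, φ.comp h = ψ) ∧
  (∀ ψ : F →ₗ[R] F, φ.comp ψ = φ → Function.Bijective ψ)

/-- `E` is an injective hull of `N`: `E` is injective and contains `N` as an
essential submodule. -/
def IsInjectiveHull (N E : Type u) [AddCommGroup N] [Module R N]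
    [AddCommGroup E] [Module R E] : Prop :=
  Module.Injective R E ∧ ∃ ι : N →ₗ[R] E, Function.Injective ι ∧
    ∀ K : Submodule R E, K ≠ ⊥ → K ⊓ LinearMap.range ι ≠ ⊥

end

/-! ### `Ext` of modules -/

namespace DualBass

noncomputable section

open scoped TensorProduct

section ExtBasics

variable {R : Type u} [CommRing R]

/-- `Ext^i_R(M, N)` for unbundled modules, defined through the derived category. Unlike `extM`, it
comes with the long exact sequences in both variables. -/
abbrev E (R : Type u) [CommRing R] (M N : Type u) [AddCommGroup M] [Module R M]
    [AddCommGroup N] [Module R N] (i : ℕ) : Type u :=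
  Abelian.Ext (ModuleCat.of R M) (ModuleCat.of R N) i

variable {A B X Y Z : Type u} [AddCommGroup A] [Module R A] [AddCommGroup B] [Module R B]
  [AddCommGroup X] [Module R X] [AddCommGroup Y] [Module R Y] [AddCommGroup Z] [Module R Z]

/-- The map `Ext^n(B, Y) → Ext^n(A, Y)` induced by `f : A → B`. -/
def pre (f : A →ₗ[R] B) (Y : Type u) [AddCommGroup Y] [Module R Y] (n : ℕ) :
    E R B Y n →ₗ[R] E R A Y n :=
  (Abelian.Ext.mk₀ (ModuleCat.ofHom f)).precompOfLinear R (ModuleCat.of R Y) (zero_add n)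

/-- The map `Ext^n(Y, A) → Ext^n(Y, B)` induced by `f : A → B`. -/
def post (f : A →ₗ[R] B) (Y : Type u) [AddCommGroup Y] [Module R Y] (n : ℕ) :
    E R Y A n →ₗ[R] E R Y B n :=
  (Abelian.Ext.mk₀ (ModuleCat.ofHom f)).postcompOfLinear R (ModuleCat.of R Y) (add_zero n)

/-- `Ext^0 = Hom`. -/
def e0 : E R X Y 0 ≃ₗ[R] (X →ₗ[R] Y) :=
  Abelian.Ext.linearEquiv₀.trans ModuleCat.homLinearEquiv

lemma e0_symm_apply (φ : X →ₗ[R] Y) : e0.symm φ = Abelian.Ext.mk₀ (ModuleCat.ofHom φ) := rfl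

lemma pre_e0_symm (f : A →ₗ[R] B) (φ : B →ₗ[R] Y) :
    pre f Y 0 (e0.symm φ) = e0.symm (φ ∘ₗ f) := by
  simp only [pre, e0_symm_apply, Abelian.Ext.bilinearCompOfLinear_apply_apply,
    Abelian.Ext.mk₀_comp_mk₀]
  rfl

lemma post_e0_symm (f : A →ₗ[R] B) (φ : Y →ₗ[R] A) :
    post f Y 0 (e0.symm φ) = e0.symm (f ∘ₗ φ) := by
  simp only [post, e0_symm_apply, LinearMap.flip_apply,
    Abelian.Ext.bilinearCompOfLinear_apply_apply, Abelian.Ext.mk₀_comp_mk₀]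
  rfl

lemma ext_subsingleton_zero_iff : Subsingleton (E R X Y 0) ↔ Subsingleton (X →ₗ[R] Y) :=
  e0.toEquiv.subsingleton_congr

lemma pre_comp (f : A →ₗ[R] B) (g : B →ₗ[R] X) (Y : Type u) [AddCommGroup Y] [Module R Y] (n : ℕ)
    (e : E R X Y n) : pre (g ∘ₗ f) Y n e = pre f Y n (pre g Y n e) := by
  simp only [pre, Abelian.Ext.bilinearCompOfLinear_apply_apply, ModuleCat.ofHom_comp,
    ← Abelian.Ext.mk₀_comp_mk₀_assoc]

lemma post_comp (f : A →ₗ[R] B) (g : B →ₗ[R] X) (Y : Type u) [AddCommGroup Y] [Module R Y] (n : ℕ)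
    (e : E R Y A n) : post (g ∘ₗ f) Y n e = post g Y n (post f Y n e) := by
  simp only [post, LinearMap.flip_apply, Abelian.Ext.bilinearCompOfLinear_apply_apply,
    ModuleCat.ofHom_comp, ← Abelian.Ext.mk₀_comp_mk₀, Abelian.Ext.comp_assoc_of_third_deg_zero]

lemma pre_id (n : ℕ) (e : E R X Y n) : pre (LinearMap.id : X →ₗ[R] X) Y n e = e := by
  simp only [pre, Abelian.Ext.bilinearCompOfLinear_apply_apply, ModuleCat.ofHom_id,
    Abelian.Ext.mk₀_id_comp]

lemma post_id (n : ℕ) (e : E R Y X n) : post (LinearMap.id : X →ₗ[R] X) Y n e = e := by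
  simp only [post, LinearMap.flip_apply, Abelian.Ext.bilinearCompOfLinear_apply_apply,
    ModuleCat.ofHom_id, Abelian.Ext.comp_mk₀_id]

lemma pre_smul (r : R) (n : ℕ) (e : E R X Y n) :
    pre (r • (LinearMap.id : X →ₗ[R] X)) Y n e = r • e := by
  have : ModuleCat.ofHom (r • (LinearMap.id : X →ₗ[R] X)) = r • 𝟙 (ModuleCat.of R X) := rfl
  simp only [pre, Abelian.Ext.bilinearCompOfLinear_apply_apply, this, Abelian.Ext.mk₀_smul,
    Abelian.Ext.smul_comp, Abelian.Ext.mk₀_id_comp]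

/-- `Ext` is invariant under isomorphism in the first variable. -/
def preEquiv (e : A ≃ₗ[R] B) (Y : Type u) [AddCommGroup Y] [Module R Y] (n : ℕ) :
    E R B Y n ≃ₗ[R] E R A Y n :=
  LinearEquiv.ofLinearMap (pre e.toLinearMap Y n) (pre e.symm.toLinearMap Y n)
    (by ext x; simp [← pre_comp, pre_id]) (by ext x; simp [← pre_comp, pre_id])

/-- `Ext` is invariant under isomorphism in the second variable. -/
def postEquiv (e : A ≃ₗ[R] B) (Y : Type u) [AddCommGroup Y] [Module R Y] (n : ℕ) :
    E R Y A n ≃ₗ[R] E R Y B n :=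
  LinearEquiv.ofLinearMap (post e.toLinearMap Y n) (post e.symm.toLinearMap Y n)
    (by ext x; simp [← post_comp, post_id]) (by ext x; simp [← post_comp, post_id])

instance ext_proj [Module.Projective R X] (n : ℕ) : Subsingleton (E R X Y (n + 1)) :=
  Abelian.Ext.subsingleton_of_projective (P := ModuleCat.of R X) _ _

instance ext_inj [Module.Injective R Y] (n : ℕ) : Subsingleton (E R X Y (n + 1)) := by
  have : Injective (ModuleCat.of R Y) := (Module.injective_iff_injective_object R Y).1 inferInstance
  exact Abelian.Ext.subsingleton_of_injective (I := ModuleCat.of R Y) _ _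

instance ext_finite [IsNoetherianRing R] [Module.Finite R X] [Module.Finite R Y] (n : ℕ) :
    Module.Finite R (E R X Y n) :=
  ModuleCat.finite_ext R (ModuleCat.of R X) (ModuleCat.of R Y) n

section les

variable {f : A →ₗ[R] B} {g : B →ₗ[R] X}

lemma shortExact (hf : Function.Injective f) (hg : Function.Surjective g)
    (h : Function.Exact f g) :
    (ModuleCat.shortComplexOfCompEqZero f g h.linearMap_comp_eq_zero).ShortExact :=
  ModuleCat.shortComplex_shortExact _ h hf hg

/-- The contravariant long exact sequence. -/
lemma les_contra (hf : Function.Injective f) (hg : Function.Surjective g)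
    (h : Function.Exact f g) (Y : Type u) [AddCommGroup Y] [Module R Y] (n : ℕ) :
    ∃ δ : E R A Y n →ₗ[R] E R X Y (n + 1), Function.Exact (pre g Y n) (pre f Y n) ∧
      Function.Exact (pre f Y n) δ ∧ Function.Exact δ (pre g Y (n + 1)) := by
  have hS := shortExact hf hg h
  refine ⟨hS.extClass.precompOfLinear R (ModuleCat.of R Y) (add_comm 1 n), ?_, ?_, ?_⟩
  · intro x
    constructor
    · exact fun hx ↦ Abelian.Ext.contravariant_sequence_exact₂ hS _ x hx
    · rintro ⟨y, rfl⟩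
      rw [← pre_comp, h.linearMap_comp_eq_zero]
      simp [pre]
  · intro x
    constructor
    · exact fun hx ↦ Abelian.Ext.contravariant_sequence_exact₁ hS _ x (add_comm 1 n) hx
    · rintro ⟨y, rfl⟩
      exact hS.extClass_comp_assoc y (h := add_comm 1 n)
  · intro x
    constructor
    · exact fun hx ↦ Abelian.Ext.contravariant_sequence_exact₃ hS _ x hx (add_comm 1 n)
    · rintro ⟨y, rfl⟩
      exact hS.comp_extClass_assoc y (add_comm 1 n)

/-- The covariant long exact sequence. -/
lemma les_cov (hf : Function.Injective f) (hg : Function.Surjective g)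
    (h : Function.Exact f g) (Y : Type u) [AddCommGroup Y] [Module R Y] (n : ℕ) :
    ∃ δ : E R Y X n →ₗ[R] E R Y A (n + 1), Function.Exact (post f Y n) (post g Y n) ∧
      Function.Exact (post g Y n) δ ∧ Function.Exact δ (post f Y (n + 1)) := by
  have hS := shortExact hf hg h
  refine ⟨hS.extClass.postcompOfLinear R (ModuleCat.of R Y) rfl, ?_, ?_, ?_⟩
  · intro x
    constructor
    · exact fun hx ↦ Abelian.Ext.covariant_sequence_exact₂ _ hS x hx
    · rintro ⟨y, rfl⟩
      rw [← post_comp, h.linearMap_comp_eq_zero]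
      simp [post]
  · intro x
    constructor
    · exact fun hx ↦ Abelian.Ext.covariant_sequence_exact₃ _ hS x rfl hx
    · rintro ⟨y, rfl⟩
      simp only [post, LinearMap.flip_apply, Abelian.Ext.bilinearCompOfLinear_apply_apply]
      rw [Abelian.Ext.comp_assoc_of_second_deg_zero]
      exact (congrArg (fun z ↦ y.comp z _) hS.comp_extClass).trans (by simp)
  · intro x
    constructor
    · exact fun hx ↦ Abelian.Ext.covariant_sequence_exact₁ _ hS x hx rfl
    · rintro ⟨y, rfl⟩
      simp only [post, LinearMap.flip_apply, Abelian.Ext.bilinearCompOfLinear_apply_apply]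
      rw [Abelian.Ext.comp_assoc_of_third_deg_zero]
      exact (congrArg (fun z ↦ y.comp z _) hS.extClass_comp).trans (by simp)

end les

end ExtBasics

end

end DualBass

/-! ### The concrete `Ext` and `Tor` -/

namespace DualBass

noncomputable section

open scoped TensorProduct

section Compare

variable {R : Type u} [CommRing R]
variable {X Y : Type u} [AddCommGroup X] [Module R X] [AddCommGroup Y] [Module R Y]

lemma ext_subsingleton_iff_resolution (P : ProjectiveResolution (ModuleCat.of R X)) (n : ℕ) :
    Subsingleton (E R X Y (n + 1)) ↔ ∀ f : P.complex.X (n + 1) ⟶ ModuleCat.of R Y,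
      P.complex.d (n + 2) (n + 1) ≫ f = 0 → ∃ g, P.complex.d (n + 1) n ≫ g = f := by
  constructor
  · intro h f hf
    exact (P.extMk_eq_zero_iff f (n + 2) rfl hf n rfl).1 (Subsingleton.elim _ _)
  · intro h
    rw [subsingleton_iff_forall_eq 0]
    intro α
    obtain ⟨f, hf, rfl⟩ := P.extMk_surjective α (n + 2) rfl
    exact (P.extMk_eq_zero_iff f (n + 2) rfl hf n rfl).2 (h f hf)

/-- The derived-functor `Ext` and the derived-category `Ext` vanish simultaneously in positive
degrees: both are computed by a projective resolution. -/
lemma extM_subsingleton_iff (n : ℕ) :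
    Subsingleton (extM R X Y (n + 1)) ↔ Subsingleton (E R X Y (n + 1)) := by
  let P := projectiveResolution (ModuleCat.of R X)
  rw [ext_subsingleton_iff_resolution P]
  have e := P.isoExt (R := R) (n + 1) (ModuleCat.of R Y)
  have h1 : Subsingleton (extM R X Y (n + 1)) ↔
      Subsingleton ((P.complex.linearYonedaObj R (ModuleCat.of R Y)).homology (n + 1)) :=
    e.toLinearEquiv.toEquiv.subsingleton_congr
  rw [h1, ← ModuleCat.isZero_iff_subsingleton, ← HomologicalComplex.exactAt_iff_isZero_homology,
    HomologicalComplex.exactAt_iff' _ n (n + 1) (n + 2) (by simp) (by simp),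
    ShortComplex.moduleCat_exact_iff]
  rfl

lemma exact_dual_iff {A B D : Type u} [AddCommGroup A] [Module R A] [AddCommGroup B] [Module R B]
    [AddCommGroup D] [Module R D] (f : A →ₗ[R] B) (g : B →ₗ[R] D) :
    Function.Exact (CharacterModule.dual g) (CharacterModule.dual f) ↔ Function.Exact f g := by
  constructor
  · intro h b
    constructor
    · intro hb
      by_contra hn
      have hn' : (LinearMap.range f).mkQ b ≠ 0 := by
        simpa [Submodule.Quotient.mk_eq_zero] using hn
      obtain ⟨χ, hχ⟩ := CharacterModule.exists_character_apply_ne_zero_of_ne_zero hn'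
      obtain ⟨ψ, hψ⟩ := (h (CharacterModule.dual (LinearMap.range f).mkQ χ)).1 (by
        rw [← LinearMap.comp_apply, ← CharacterModule.dual_comp, LinearMap.range_mkQ_comp,
          CharacterModule.dual_zero, LinearMap.zero_apply])
      apply hχ
      have := DFunLike.congr_fun hψ b
      refine this.symm.trans ?_
      change ψ (g b) = 0
      rw [hb, map_zero]
    · rintro ⟨a, rfl⟩
      refine CharacterModule.eq_zero_of_character_apply fun χ ↦ ?_
      have := (h (CharacterModule.dual g χ)).2 ⟨χ, rfl⟩
      exact DFunLike.congr_fun this a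
  · intro h χ
    constructor
    · intro hχ
      have hχ' : ∀ a, χ (f a) = 0 := fun a ↦ DFunLike.congr_fun hχ a
      have hk : g.rangeRestrict.toAddMonoidHom.ker ≤ AddMonoidHom.ker χ := by
        intro b hb
        obtain ⟨a, rfl⟩ := (h b).1 (congrArg Subtype.val hb)
        exact hχ' a
      let χ' : CharacterModule (LinearMap.range g) :=
        AddMonoidHom.liftOfSurjective g.rangeRestrict.toAddMonoidHom
          g.surjective_rangeRestrict ⟨χ, hk⟩
      obtain ⟨ψ, hψ⟩ := CharacterModule.dual_surjective_of_injective
        (LinearMap.range g).subtype Subtype.val_injective χ'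
      refine ⟨ψ, ?_⟩
      ext b
      have h1 : ψ (g b) = χ' (g.rangeRestrict b) := DFunLike.congr_fun hψ (g.rangeRestrict b)
      refine h1.trans ?_
      exact AddMonoidHom.liftOfRightInverse_comp_apply g.rangeRestrict.toAddMonoidHom _
        (Function.rightInverse_surjInv g.surjective_rangeRestrict) ⟨χ, hk⟩ b
    · rintro ⟨ψ, rfl⟩
      ext a
      change ψ (g (f a)) = 0
      rw [h.apply_apply_eq_zero, map_zero]

lemma exact_lTensor_iff {A B D : Type u} [AddCommGroup A] [Module R A] [AddCommGroup B]
    [Module R B] [AddCommGroup D] [Module R D] (f : A →ₗ[R] B) (g : B →ₗ[R] D)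
    (hfg : g ∘ₗ f = 0) :
    Function.Exact (f.lTensor X) (g.lTensor X) ↔
      ∀ φ : B →ₗ[R] CharacterModule X, φ ∘ₗ f = 0 → ∃ ψ : D →ₗ[R] CharacterModule X,
        ψ ∘ₗ g = φ := by
  rw [← LinearMap.rTensor_exact_iff_lTensor_exact, ← exact_dual_iff]
  have key : ∀ {A B : Type u} [AddCommGroup A] [Module R A] [AddCommGroup B] [Module R B]
      (f : A →ₗ[R] B) (φ : B →ₗ[R] CharacterModule X),
      CharacterModule.dual (f.rTensor X) (CharacterModule.homEquiv φ) =
        CharacterModule.homEquiv (φ ∘ₗ f) := by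
    intro A B _ _ _ _ f φ
    apply CharacterModule.homEquiv.symm.injective
    rw [LinearEquiv.symm_apply_apply]
    exact DFunLike.congr_fun (CharacterModule.dual_rTensor_conj_homEquiv B f) φ
  constructor
  · intro h φ hφ
    obtain ⟨c, hc⟩ := (h (CharacterModule.homEquiv φ)).1 (by rw [key, hφ, map_zero])
    refine ⟨CharacterModule.homEquiv.symm c, ?_⟩
    apply CharacterModule.homEquiv.injective
    rw [← key, LinearEquiv.apply_symm_apply, hc]
  · intro h c
    obtain ⟨φ, rfl⟩ := CharacterModule.homEquiv.surjective c
    rw [key, map_eq_zero_iff _ CharacterModule.homEquiv.injective]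
    constructor
    · intro hφ
      obtain ⟨ψ, rfl⟩ := h φ hφ
      exact ⟨CharacterModule.homEquiv ψ, key _ _⟩
    · rintro ⟨c, hc⟩
      obtain ⟨ψ, rfl⟩ := CharacterModule.homEquiv.surjective c
      rw [key] at hc
      rw [← CharacterModule.homEquiv.injective hc, LinearMap.comp_assoc, hfg, LinearMap.comp_zero]

lemma torM_zero_subsingleton_iff :
    Subsingleton (torM R X Y 0) ↔ Subsingleton (E R Y (CharacterModule X) 0) := by
  rw [ext_subsingleton_zero_iff]
  have e := (((MonoidalCategory.tensoringLeft (ModuleCat.{u} R)).obj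
    (ModuleCat.of R X)).leftDerivedZeroIsoSelf).app (ModuleCat.of R Y)
  have h1 : Subsingleton (torM R X Y 0) ↔ Subsingleton (X ⊗[R] Y) :=
    e.toLinearEquiv.toEquiv.subsingleton_congr
  rw [h1, (TensorProduct.comm R X Y).toEquiv.subsingleton_congr,
    CharacterModule.homEquiv.toEquiv.subsingleton_congr]
  constructor
  · intro h
    exact ⟨fun a b ↦ by ext x; rw [Subsingleton.elim x 0, map_zero, map_zero]⟩
  · intro h
    rw [subsingleton_iff_forall_eq 0]
    exact fun x ↦ CharacterModule.eq_zero_of_character_apply fun χ ↦ by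
      rw [Subsingleton.elim χ 0]; rfl

lemma torM_succ_subsingleton_iff (n : ℕ) :
    Subsingleton (torM R X Y (n + 1)) ↔ Subsingleton (E R Y (CharacterModule X) (n + 1)) := by
  let P := projectiveResolution (ModuleCat.of R Y)
  rw [ext_subsingleton_iff_resolution P]
  let F := (MonoidalCategory.tensoringLeft (ModuleCat.{u} R)).obj (ModuleCat.of R X)
  have e := P.isoLeftDerivedObj F (n + 1)
  have h1 : Subsingleton (torM R X Y (n + 1)) ↔
      Subsingleton (((F.mapHomologicalComplex _).obj P.complex).homology (n + 1)) :=
    e.toLinearEquiv.toEquiv.subsingleton_congr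
  rw [h1, ← ModuleCat.isZero_iff_subsingleton, ← HomologicalComplex.exactAt_iff_isZero_homology,
    HomologicalComplex.exactAt_iff' _ (n + 2) (n + 1) n (by simp) (by simp),
    ShortComplex.ShortExact.moduleCat_exact_iff_function_exact]
  refine (exact_lTensor_iff (X := X) (P.complex.d (n + 2) (n + 1)).hom
    (P.complex.d (n + 1) n).hom (by rw [← ModuleCat.hom_comp, P.complex.d_comp_d]; rfl)).trans ?_
  constructor
  · intro h f hf
    obtain ⟨ψ, hψ⟩ := h f.hom (by rw [← ModuleCat.hom_comp, hf]; rfl)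
    exact ⟨ModuleCat.ofHom ψ, ModuleCat.hom_ext hψ⟩
  · intro h φ hφ
    obtain ⟨g, hg⟩ := h (ModuleCat.ofHom φ) (ModuleCat.hom_ext hφ)
    exact ⟨g.hom, congrArg ModuleCat.Hom.hom hg⟩

/-- `Tor_n(X, Y)` vanishes exactly when `Ext^n(Y, X^∨)` does, as the latter is the character module
of the former. -/
lemma torM_subsingleton_iff (n : ℕ) :
    Subsingleton (torM R X Y n) ↔ Subsingleton (E R Y (CharacterModule X) n) := by
  cases n with
  | zero => exact torM_zero_subsingleton_iff
  | succ n => exact torM_succ_subsingleton_iff n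

end Compare

end

end DualBass

/-! ### Short exact sequences, cotorsion and flatness -/

namespace DualBass

noncomputable section

open scoped TensorProduct

section Tools

variable {R : Type u} [CommRing R]
variable {A B X Y Z : Type u} [AddCommGroup A] [Module R A] [AddCommGroup B] [Module R B]
  [AddCommGroup X] [Module R X] [AddCommGroup Y] [Module R Y] [AddCommGroup Z] [Module R Z]

/-- The sequence `0 → A → B → X → 0` is exact. -/
structure SES (f : A →ₗ[R] B) (g : B →ₗ[R] X) : Prop where
  inj : Function.Injective f
  surj : Function.Surjective g
  exact : Function.Exact f g

lemma SES.ofSurj {g : B →ₗ[R] X} (hg : Function.Surjective g) : SES (LinearMap.ker g).subtype g :=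
  ⟨Subtype.val_injective, hg, g.exact_subtype_ker_map⟩

lemma SES.ofInj {f : A →ₗ[R] B} (hf : Function.Injective f) : SES f (LinearMap.range f).mkQ :=
  ⟨hf, Submodule.mkQ_surjective _, LinearMap.exact_map_mkQ_range f⟩

lemma SES.ofSub (N : Submodule R B) : SES N.subtype N.mkQ :=
  ⟨Subtype.val_injective, N.mkQ_surjective, LinearMap.exact_subtype_mkQ N⟩

lemma SES.dual {f : A →ₗ[R] B} {g : B →ₗ[R] X} (h : SES f g) :
    SES (CharacterModule.dual g) (CharacterModule.dual f) :=
  ⟨CharacterModule.dual_injective_of_surjective g h.surj,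
    CharacterModule.dual_surjective_of_injective f h.inj, (exact_dual_iff f g).2 h.exact⟩

/-- Every element of `Z` is annihilated by some element of `S`. -/
def IsTors (S : Submonoid R) (Z : Type u) [AddCommGroup Z] [Module R Z] : Prop :=
  ∀ z : Z, ∃ s ∈ S, s • z = 0

lemma IsTors.of_subsingleton (S : Submonoid R) [Subsingleton Z] : IsTors S Z :=
  fun _ ↦ ⟨1, S.one_mem, Subsingleton.elim _ _⟩

lemma IsTors.mono {S T : Submonoid R} (h : IsTors S Z) (hST : S ≤ T) : IsTors T Z :=
  fun z ↦ (h z).imp fun _ hs ↦ ⟨hST hs.1, hs.2⟩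

lemma IsTors.mid {S : Submonoid R} {f : A →ₗ[R] B} {g : B →ₗ[R] X} (h : Function.Exact f g)
    (hA : IsTors S A) (hX : IsTors S X) : IsTors S B := by
  intro b
  obtain ⟨s, hs, hb⟩ := hX (g b)
  rw [← map_smul] at hb
  obtain ⟨a, ha⟩ := (h _).1 hb
  obtain ⟨t, ht, hta⟩ := hA a
  refine ⟨t * s, S.mul_mem ht hs, ?_⟩
  rw [mul_smul, ← ha, ← map_smul, hta, map_zero]

lemma IsTors.of_injective {S : Submonoid R} {f : A →ₗ[R] B} (hf : Function.Injective f)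
    (hB : IsTors S B) : IsTors S A := by
  intro a
  obtain ⟨s, hs, h⟩ := hB (f a)
  exact ⟨s, hs, hf (by rw [map_smul, h, map_zero])⟩

lemma IsTors.of_surjective {S : Submonoid R} {f : A →ₗ[R] B} (hf : Function.Surjective f)
    (hA : IsTors S A) : IsTors S B := by
  intro b
  obtain ⟨a, rfl⟩ := hf b
  obtain ⟨s, hs, h⟩ := hA a
  exact ⟨s, hs, by rw [← map_smul, h, map_zero]⟩

lemma isTors_congr {S : Submonoid R} (e : A ≃ₗ[R] B) : IsTors S A ↔ IsTors S B :=
  ⟨.of_surjective e.surjective (f := e.toLinearMap), .of_injective e.injective (f := e.toLinearMap)⟩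

lemma isTors_bot : IsTors (⊥ : Submonoid R) Z ↔ Subsingleton Z := by
  refine ⟨fun h ↦ ?_, fun h ↦ .of_subsingleton _⟩
  rw [subsingleton_iff_forall_eq 0]
  intro z
  obtain ⟨s, hs, h⟩ := h z
  rwa [Submonoid.mem_bot.1 hs, one_smul] at h

/-- A finitely generated torsion module has a common annihilating element. -/
lemma IsTors.exists_smul {S : Submonoid R} [Module.Finite R Z] (h : IsTors S Z) :
    ∃ s ∈ S, ∀ z : Z, s • z = 0 := by
  suffices H : ∀ N : Submodule R Z, N.FG → ∃ s ∈ S, ∀ z ∈ N, s • z = 0 by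
    obtain ⟨s, hs, H⟩ := H ⊤ Module.Finite.fg_top
    exact ⟨s, hs, fun z ↦ H z trivial⟩
  intro N hN
  induction N, hN using Submodule.fg_induction with
  | singleton x =>
    obtain ⟨s, hs, hx⟩ := h x
    refine ⟨s, hs, fun z hz ↦ ?_⟩
    obtain ⟨r, rfl⟩ := Submodule.mem_span_singleton.1 hz
    rw [smul_comm, hx, smul_zero]
  | sup M₁ M₂ hM₁ hM₂ h₁ h₂ =>
    obtain ⟨s, hs, h₁⟩ := h₁
    obtain ⟨t, ht, h₂⟩ := h₂
    refine ⟨s * t, S.mul_mem hs ht, fun z hz ↦ ?_⟩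
    obtain ⟨a, ha, b, hb, rfl⟩ := Submodule.mem_sup.1 hz
    rw [smul_add, mul_smul, mul_smul, h₂ b hb, smul_zero, add_zero, smul_comm, h₁ a ha, smul_zero]

lemma sub_mid {f : A →ₗ[R] B} {g : B →ₗ[R] X} (h : Function.Exact f g)
    (hA : Subsingleton A) (hX : Subsingleton X) : Subsingleton B :=
  isTors_bot.1 ((isTors_bot.2 hA).mid h (isTors_bot.2 hX))

section les

variable {f : A →ₗ[R] B} {g : B →ₗ[R] X} (h : SES f g) {S : Submonoid R} {n : ℕ}
include h

lemma SES.tors_mid (h1 : IsTors S (E R X Y n)) (h2 : IsTors S (E R A Y n)) :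
    IsTors S (E R B Y n) := by
  obtain ⟨δ, a, b, c⟩ := les_contra h.inj h.surj h.exact Y n
  exact h1.mid a h2

lemma SES.tors_right (h1 : IsTors S (E R A Y n)) (h2 : IsTors S (E R B Y (n + 1))) :
    IsTors S (E R X Y (n + 1)) := by
  obtain ⟨δ, a, b, c⟩ := les_contra h.inj h.surj h.exact Y n
  exact h1.mid c h2

lemma SES.tors_left (h1 : IsTors S (E R B Y n)) (h2 : IsTors S (E R X Y (n + 1))) :
    IsTors S (E R A Y n) := by
  obtain ⟨δ, a, b, c⟩ := les_contra h.inj h.surj h.exact Y n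
  exact h1.mid b h2

lemma SES.sub_mid (h1 : Subsingleton (E R X Y n)) (h2 : Subsingleton (E R A Y n)) :
    Subsingleton (E R B Y n) :=
  isTors_bot.1 (h.tors_mid (isTors_bot.2 h1) (isTors_bot.2 h2))

lemma SES.sub_right (h1 : Subsingleton (E R A Y n)) (h2 : Subsingleton (E R B Y (n + 1))) :
    Subsingleton (E R X Y (n + 1)) :=
  isTors_bot.1 (h.tors_right (isTors_bot.2 h1) (isTors_bot.2 h2))

lemma SES.sub_left (h1 : Subsingleton (E R B Y n)) (h2 : Subsingleton (E R X Y (n + 1))) :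
    Subsingleton (E R A Y n) :=
  isTors_bot.1 (h.tors_left (isTors_bot.2 h1) (isTors_bot.2 h2))

lemma SES.sub_right' (h1 : Subsingleton (E R Y B n)) (h2 : Subsingleton (E R Y A (n + 1))) :
    Subsingleton (E R Y X n) := by
  obtain ⟨δ, a, b, c⟩ := les_cov h.inj h.surj h.exact Y n
  exact DualBass.sub_mid b h1 h2

lemma SES.sub_left' (h1 : Subsingleton (E R Y X n)) (h2 : Subsingleton (E R Y B (n + 1))) :
    Subsingleton (E R Y A (n + 1)) := by
  obtain ⟨δ, a, b, c⟩ := les_cov h.inj h.surj h.exact Y n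
  exact DualBass.sub_mid c h1 h2

/-- Dimension shifting in the first variable. -/
lemma SES.shift (h1 : Subsingleton (E R B Y (n + 1))) (h2 : Subsingleton (E R B Y (n + 2))) :
    Nonempty (E R A Y (n + 1) ≃ₗ[R] E R X Y (n + 2)) := by
  obtain ⟨δ, a, b, c⟩ := les_contra h.inj h.surj h.exact Y (n + 1)
  refine ⟨.ofBijective δ ⟨?_, ?_⟩⟩
  · rw [injective_iff_map_eq_zero]
    intro x hx
    obtain ⟨y, rfl⟩ := (b x).1 hx
    rw [Subsingleton.elim y 0, map_zero]
  · exact fun x ↦ (c x).1 (Subsingleton.elim _ _)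

/-- Dimension shifting in the second variable. -/
lemma SES.shift' (h1 : Subsingleton (E R Y B (n + 1))) (h2 : Subsingleton (E R Y B (n + 2))) :
    Nonempty (E R Y X (n + 1) ≃ₗ[R] E R Y A (n + 2)) := by
  obtain ⟨δ, a, b, c⟩ := les_cov h.inj h.surj h.exact Y (n + 1)
  refine ⟨.ofBijective δ ⟨?_, ?_⟩⟩
  · rw [injective_iff_map_eq_zero]
    intro x hx
    obtain ⟨y, rfl⟩ := (b x).1 hx
    rw [Subsingleton.elim y 0, map_zero]
  · exact fun x ↦ (c x).1 (Subsingleton.elim _ _)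

/-- The connecting map `Hom(A, Y) → Ext^1(X, Y)`: its kernel consists of the maps extending
to `B`. -/
lemma SES.ext_one (Y : Type u) [AddCommGroup Y] [Module R Y] :
    ∃ δ : (A →ₗ[R] Y) →ₗ[R] E R X Y 1, (∀ φ, δ φ = 0 ↔ ∃ ψ : B →ₗ[R] Y, ψ ∘ₗ f = φ) ∧
      Function.Exact δ (pre g Y 1) := by
  obtain ⟨δ, a, b, c⟩ := les_contra h.inj h.surj h.exact Y 0
  refine ⟨δ ∘ₗ e0.symm.toLinearMap, ?_, ?_⟩
  · intro φ
    rw [LinearMap.comp_apply]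
    refine (b _).trans ⟨?_, ?_⟩
    · rintro ⟨ψ, hψ⟩
      obtain ⟨ψ, rfl⟩ := e0.symm.surjective ψ
      rw [pre_e0_symm] at hψ
      exact ⟨ψ, e0.symm.injective hψ⟩
    · rintro ⟨ψ, rfl⟩
      exact ⟨e0.symm ψ, pre_e0_symm f ψ⟩
  · intro x
    refine (c x).trans ⟨?_, ?_⟩
    · rintro ⟨y, rfl⟩
      exact ⟨e0 y, by simp⟩
    · rintro ⟨y, rfl⟩
      exact ⟨e0.symm y, rfl⟩

/-- The connecting map `Hom(Y, X) → Ext^1(Y, A)`: its kernel consists of the maps lifting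
to `B`. -/
lemma SES.ext_one' (Y : Type u) [AddCommGroup Y] [Module R Y] :
    ∃ δ : (Y →ₗ[R] X) →ₗ[R] E R Y A 1, (∀ φ, δ φ = 0 ↔ ∃ ψ : Y →ₗ[R] B, g ∘ₗ ψ = φ) ∧
      Function.Exact δ (post f Y 1) := by
  obtain ⟨δ, a, b, c⟩ := les_cov h.inj h.surj h.exact Y 0
  refine ⟨δ ∘ₗ e0.symm.toLinearMap, ?_, ?_⟩
  · intro φ
    rw [LinearMap.comp_apply]
    refine (b _).trans ⟨?_, ?_⟩
    · rintro ⟨ψ, hψ⟩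
      obtain ⟨ψ, rfl⟩ := e0.symm.surjective ψ
      rw [post_e0_symm] at hψ
      exact ⟨ψ, e0.symm.injective hψ⟩
    · rintro ⟨ψ, rfl⟩
      exact ⟨e0.symm ψ, post_e0_symm g ψ⟩
  · intro x
    refine (c x).trans ⟨?_, ?_⟩
    · rintro ⟨y, rfl⟩
      exact ⟨e0 y, by simp⟩
    · rintro ⟨y, rfl⟩
      exact ⟨e0.symm y, rfl⟩

lemma SES.sub_one_iff (hB : Subsingleton (E R B Y 1)) :
    Subsingleton (E R X Y 1) ↔ ∀ φ : A →ₗ[R] Y, ∃ ψ : B →ₗ[R] Y, ψ ∘ₗ f = φ := by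
  obtain ⟨δ, a, b⟩ := h.ext_one Y
  constructor
  · exact fun _ φ ↦ (a φ).1 (Subsingleton.elim _ _)
  · intro H
    rw [subsingleton_iff_forall_eq 0]
    intro x
    obtain ⟨y, rfl⟩ := (b x).1 (Subsingleton.elim _ _)
    exact (a y).2 (H y)

lemma SES.sub_one_iff' (hB : Subsingleton (E R Y B 1)) :
    Subsingleton (E R Y A 1) ↔ ∀ φ : Y →ₗ[R] X, ∃ ψ : Y →ₗ[R] B, g ∘ₗ ψ = φ := by
  obtain ⟨δ, a, b⟩ := h.ext_one' Y
  constructor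
  · exact fun _ φ ↦ (a φ).1 (Subsingleton.elim _ _)
  · intro H
    rw [subsingleton_iff_forall_eq 0]
    intro x
    obtain ⟨y, rfl⟩ := (b x).1 (Subsingleton.elim _ _)
    exact (a y).2 (H y)

end les

variable (R X) in
lemma exists_free_cover : ∃ (P : Type u) (_ : AddCommGroup P) (_ : Module R P) (g : P →ₗ[R] X),
    Module.Free R P ∧ Function.Surjective g :=
  ⟨X →₀ R, inferInstance, inferInstance, Finsupp.linearCombination R id, inferInstance,
    Finsupp.linearCombination_id_surjective R X⟩

variable (R X) in
lemma exists_fin_cover [Module.Finite R X] :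
    ∃ (P : Type u) (_ : AddCommGroup P) (_ : Module R P) (g : P →ₗ[R] X),
    Module.Free R P ∧ Module.Finite R P ∧ Function.Surjective g := by
  obtain ⟨P, _, _, h1, h2, g, hg⟩ := Module.exists_finite_presentation R X
  exact ⟨P, _, _, g, h1, h2, hg⟩

variable (R X) in
lemma exists_inj_embed : ∃ (I : Type u) (_ : AddCommGroup I) (_ : Module R I) (f : X →ₗ[R] I),
    Module.Injective R I ∧ Function.Injective f := by
  let I : ModuleCat.{u} R := Injective.under (ModuleCat.of R X)
  refine ⟨I, inferInstance, inferInstance, (Injective.ι (ModuleCat.of R X)).hom, ?_, ?_⟩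
  · rw [Module.injective_iff_injective_object]
    exact inferInstanceAs (Injective (Injective.under (ModuleCat.of R X)))
  · exact (ModuleCat.mono_iff_injective _).1 inferInstance

lemma lift_dual_iff (f : A →ₗ[R] B) : (∀ φ : Y →ₗ[R] CharacterModule A,
      ∃ ψ : Y →ₗ[R] CharacterModule B, CharacterModule.dual f ∘ₗ ψ = φ) ↔
    Function.Injective (f.lTensor Y) := by
  have key : ∀ ψ : Y →ₗ[R] CharacterModule B,
      CharacterModule.dual (f.lTensor Y) (CharacterModule.homEquiv ψ) =
        CharacterModule.homEquiv (CharacterModule.dual f ∘ₗ ψ) := by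
    intro ψ
    ext x
    induction x with
    | zero => exact (map_zero _).trans (map_zero _).symm
    | add a b ha hb => rw [map_add, map_add, ha, hb]
    | tmul a b => rfl
  rw [← CharacterModule.dual_surjective_iff_injective]
  constructor
  · intro h c
    obtain ⟨ψ, hψ⟩ := h (CharacterModule.homEquiv.symm c)
    exact ⟨CharacterModule.homEquiv ψ, by rw [key, hψ, LinearEquiv.apply_symm_apply]⟩
  · intro h φ
    obtain ⟨c, hc⟩ := h (CharacterModule.homEquiv φ)
    obtain ⟨ψ, rfl⟩ := CharacterModule.homEquiv.surjective c
    rw [key] at hc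
    exact ⟨ψ, CharacterModule.homEquiv.injective hc⟩

/-- Character modules are cotorsion in the strong sense: all higher `Ext` groups from flat modules
vanish. -/
lemma flat_ext_dual (F : Type u) [AddCommGroup F] [Module R F] [Module.Flat R F] (n : ℕ) :
    ∀ (X : Type u) [AddCommGroup X] [Module R X],
      Subsingleton (E R F (CharacterModule X) (n + 1)) := by
  induction n with
  | zero =>
    intro X _ _
    obtain ⟨P, _, _, g, _, hg⟩ := exists_free_cover R X
    have hs := (SES.ofSurj hg).dual
    have : Module.Injective R (CharacterModule P) :=
      Module.Flat.iff_characterModule_injective.1 inferInstance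
    rw [hs.sub_one_iff' inferInstance]
    exact (lift_dual_iff _).2 (Module.Flat.lTensor_preserves_injective_linearMap (M := F)
      (LinearMap.ker g).subtype Subtype.val_injective)
  | succ n ih =>
    intro X _ _
    obtain ⟨P, _, _, g, _, hg⟩ := exists_free_cover R X
    have hs := (SES.ofSurj hg).dual
    have : Module.Injective R (CharacterModule P) :=
      Module.Flat.iff_characterModule_injective.1 inferInstance
    exact hs.sub_left' (ih _) inferInstance

/-- `Tor_1(X, Y) = 0`, expressed by `Ext^1(X, Yᵛ) = 0`, makes `- ⊗ Y` exact on sequences ending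
in `X`. -/
lemma SES.rTensor_inj {f : A →ₗ[R] B} {g : B →ₗ[R] X} (h : SES f g)
    (h1 : Subsingleton (E R X (CharacterModule Y) 1)) : Function.Injective (f.rTensor Y) := by
  rw [rTensor_injective_iff_lcomp_surjective]
  obtain ⟨δ, a, b⟩ := h.ext_one (CharacterModule Y)
  intro φ
  exact (a φ).1 (Subsingleton.elim _ _)

/-- `Hom(C, I)` is cotorsion for injective `I`. -/
lemma flat_ext_hom_inj (F C I : Type u) [AddCommGroup F] [Module R F] [Module.Flat R F]
    [AddCommGroup C] [Module R C] [AddCommGroup I] [Module R I] [Module.Injective R I] :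
    Subsingleton (E R F (C →ₗ[R] I) 1) := by
  obtain ⟨P, _, _, g, _, hg⟩ := exists_free_cover R F
  have hs := SES.ofSurj hg
  rw [hs.sub_one_iff inferInstance]
  intro φ
  have hi := hs.rTensor_inj (flat_ext_dual F 0 C)
  obtain ⟨ψ, hψ⟩ := Module.Injective.out _ hi (TensorProduct.lift φ)
  refine ⟨TensorProduct.curry ψ, ?_⟩
  ext k c
  exact hψ (k ⊗ₜ c)

end Tools

end

end DualBass

/-! ### `Tor` of `Hom(C, J)` for injective `J` -/

namespace DualBass

noncomputable section

open scoped TensorProduct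

section HomEval

variable {R : Type u} [CommRing R]
variable {A B X Y Z C J N : Type u} [AddCommGroup A] [Module R A] [AddCommGroup B] [Module R B]
  [AddCommGroup X] [Module R X] [AddCommGroup Y] [Module R Y] [AddCommGroup Z] [Module R Z]
  [AddCommGroup C] [Module R C] [AddCommGroup J] [Module R J] [AddCommGroup N] [Module R N]

lemma inj_of_exact [Module.Injective R J] {u : A →ₗ[R] B} {v : B →ₗ[R] X} (h : Function.Exact u v)
    (F : B →ₗ[R] J) (hF : F ∘ₗ u = 0) : ∃ G : X →ₗ[R] J, G ∘ₗ v = F := by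
  have hk : LinearMap.ker v ≤ LinearMap.ker F := by
    intro b hb
    obtain ⟨a, rfl⟩ := (h b).1 hb
    exact LinearMap.congr_fun hF a
  let v' : (B ⧸ LinearMap.ker v) →ₗ[R] X := (LinearMap.ker v).liftQ v le_rfl
  have hv' : Function.Injective v' := LinearMap.ker_eq_bot.1 (Submodule.ker_liftQ_eq_bot _ _ _ le_rfl)
  obtain ⟨G, hG⟩ := Module.Injective.out v' hv' ((LinearMap.ker v).liftQ F hk)
  exact ⟨G, LinearMap.ext fun b ↦ hG ((LinearMap.ker v).mkQ b)⟩

/-- The Hom evaluation map `X ⊗ Hom(C, J) → Hom(Hom(X, C), J)`, sending `x ⊗ f` to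
`g ↦ f (g x)`. -/
def homEval (X C J : Type u) [AddCommGroup X] [Module R X] [AddCommGroup C] [Module R C]
    [AddCommGroup J] [Module R J] : X ⊗[R] (C →ₗ[R] J) →ₗ[R] ((X →ₗ[R] C) →ₗ[R] J) :=
  TensorProduct.lift (LinearMap.mk₂ R (fun x f ↦ f ∘ₗ LinearMap.applyₗ x)
    (by intros; ext; simp) (by intros; ext; simp) (by intros; ext; simp) (by intros; ext; simp))

@[simp] lemma homEval_tmul (x : X) (f : C →ₗ[R] J) (g : X →ₗ[R] C) :
    homEval X C J (x ⊗ₜ f) g = f (g x) := rfl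

lemma homEval_natural (u : A →ₗ[R] B) (z : A ⊗[R] (C →ₗ[R] J)) :
    homEval B C J (u.rTensor _ z) = homEval A C J z ∘ₗ u.lcomp R C := by
  induction z with
  | zero => simp
  | add x y hx hy => simp only [map_add, hx, hy, LinearMap.add_comp]
  | tmul a f => rfl

lemma homEval_free (P : Type u) [AddCommGroup P] [Module R P] [Module.Free R P]
    [Module.Finite R P] : Function.Bijective (homEval (R := R) P C J) := by
  let b := Module.Free.chooseBasis R P
  let ψ : ((P →ₗ[R] C) →ₗ[R] J) →ₗ[R] P ⊗[R] (C →ₗ[R] J) :=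
    ∑ i, (TensorProduct.mk R P (C →ₗ[R] J) (b i)) ∘ₗ
      LinearMap.lcomp R J (LinearMap.smulRightₗ (b.coord i) : C →ₗ[R] P →ₗ[R] C)
  have hψ : ∀ F, ψ F = ∑ i, b i ⊗ₜ (F ∘ₗ LinearMap.smulRightₗ (b.coord i)) := by
    intro F; simp only [ψ, LinearMap.sum_apply]; rfl
  refine Function.bijective_iff_has_inverse.2 ⟨ψ, fun z ↦ ?_, fun F ↦ ?_⟩
  · induction z with
    | zero => simp
    | add x y hx hy => simp only [map_add, hx, hy]
    | tmul x f =>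
      rw [hψ]
      have : ∀ i, homEval P C J (x ⊗ₜ f) ∘ₗ LinearMap.smulRightₗ (b.coord i) = b.repr x i • f := by
        intro i; ext c; simp
      simp_rw [this, ← TensorProduct.smul_tmul, ← TensorProduct.sum_tmul, b.sum_repr]
  · ext g
    rw [hψ, map_sum, LinearMap.sum_apply]
    simp only [homEval_tmul, LinearMap.comp_apply, ← map_sum]
    congr 1
    ext p
    simp only [LinearMap.sum_apply, LinearMap.smulRightₗ_apply]
    conv_rhs => rw [← b.sum_repr p, map_sum]
    simp

/-- First half of the five lemma argument for `homEval_bij`. -/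
lemma homEval_surj [IsNoetherianRing R] [Module.Injective R J] [Module.Finite R X] :
    Function.Surjective (homEval (R := R) X C J) := by
  obtain ⟨P, _, _, g, _, _, hg⟩ := exists_fin_cover R X
  intro F
  have hinj : Function.Injective (g.lcomp R C) := fun a b h ↦
    LinearMap.ext fun x ↦ by obtain ⟨p, rfl⟩ := hg x; exact LinearMap.congr_fun h p
  obtain ⟨G, hG⟩ := Module.Injective.out (g.lcomp R C) hinj F
  obtain ⟨z, hz⟩ := (homEval_free (C := C) (J := J) P).2 G
  refine ⟨g.rTensor _ z, ?_⟩
  rw [homEval_natural, hz]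
  exact LinearMap.ext hG

lemma lcomp_exact {f : A →ₗ[R] B} {g : B →ₗ[R] X} (h : SES f g) :
    Function.Exact (g.lcomp R C) (f.lcomp R C) := by
  intro φ
  constructor
  · intro hφ
    have hk : LinearMap.ker g ≤ LinearMap.ker φ := by
      intro b hb
      obtain ⟨a, rfl⟩ := (h.exact b).1 hb
      exact LinearMap.congr_fun hφ a
    let e := g.quotKerEquivOfSurjective h.surj
    refine ⟨(LinearMap.ker g).liftQ φ hk ∘ₗ e.symm.toLinearMap, LinearMap.ext fun b ↦ ?_⟩
    have : e.symm (g b) = (LinearMap.ker g).mkQ b := by rw [LinearEquiv.symm_apply_eq]; rfl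
    simp [this]
  · rintro ⟨ψ, rfl⟩
    ext a
    simp [h.exact.apply_apply_eq_zero]

/-- Hom evaluation is bijective for finitely generated `X` and injective `J`. -/
lemma homEval_bij [IsNoetherianRing R] [Module.Injective R J] [Module.Finite R X] :
    Function.Bijective (homEval (R := R) X C J) := by
  refine ⟨?_, homEval_surj⟩
  obtain ⟨P, _, _, g, _, _, hg⟩ := exists_fin_cover R X
  have hs := SES.ofSurj hg
  rw [injective_iff_map_eq_zero]
  intro z hz
  obtain ⟨w, rfl⟩ := LinearMap.rTensor_surjective _ hg z
  rw [homEval_natural] at hz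
  obtain ⟨G, hG⟩ := inj_of_exact (lcomp_exact hs) _ hz
  obtain ⟨v, rfl⟩ := homEval_surj (R := R) (X := LinearMap.ker g) (C := C) (J := J) G
  rw [← homEval_natural] at hG
  rw [← (homEval_free (C := C) (J := J) P).1 hG]
  exact (rTensor_exact _ hs.exact hg _).2 ⟨v, rfl⟩

/-- The vanishing of `Tor_i(N, Hom(C, J))` is equivalent to that of `Hom(Ext^i(N, C), J)`, for
finitely generated `N` and injective `J`. -/
lemma tor_hom_iff [IsNoetherianRing R] [Module.Injective R J] (C : Type u) [AddCommGroup C]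
    [Module R C] (i : ℕ) : ∀ (N : Type u) [AddCommGroup N] [Module R N] [Module.Finite R N],
    (Subsingleton (E R (C →ₗ[R] J) (CharacterModule N) i) ↔ Subsingleton (E R N C i →ₗ[R] J)) := by
  have sub_char : ∀ (Z : Type u) [AddCommGroup Z] [Module R Z],
      Subsingleton (CharacterModule Z) ↔ Subsingleton Z := by
    intro Z _ _
    constructor
    · intro h
      rw [subsingleton_iff_forall_eq 0]
      exact fun x ↦ CharacterModule.eq_zero_of_character_apply fun χ ↦ by
        rw [Subsingleton.elim χ 0]; rfl
    · intro h
      exact ⟨fun a b ↦ by ext x; rw [Subsingleton.elim x 0, map_zero, map_zero]⟩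
  induction i using Nat.twoStepInduction with
  | zero =>
    intro N _ _ _
    rw [ext_subsingleton_zero_iff, CharacterModule.homEquiv.toEquiv.subsingleton_congr, sub_char,
      (TensorProduct.comm R _ _).toEquiv.subsingleton_congr,
      (LinearEquiv.ofBijective _ homEval_bij).toEquiv.subsingleton_congr]
    exact (e0.symm.congrLeft J R).toEquiv.subsingleton_congr
  | one =>
    intro N _ _ _
    obtain ⟨P, _, _, g, _, _, hg⟩ := exists_fin_cover R N
    have hs := SES.ofSurj hg
    have : Module.Injective R (CharacterModule P) :=
      Module.Flat.iff_characterModule_injective.1 inferInstance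
    rw [hs.dual.sub_one_iff' inferInstance, lift_dual_iff, LinearMap.lTensor_inj_iff_rTensor_inj]
    set ι := (LinearMap.ker g).subtype with hι
    obtain ⟨δ, hδ, hδ'⟩ := hs.ext_one C
    have hδs : Function.Surjective δ := fun x ↦ (hδ' x).1 (Subsingleton.elim _ _)
    constructor
    · intro hi
      refine ⟨fun a b ↦ ?_⟩
      rw [← sub_eq_zero]
      generalize a - b = T
      obtain ⟨z, hz⟩ := homEval_surj (R := R) (T ∘ₗ δ)
      have h0 : ι.rTensor _ z = 0 := by
        apply (homEval_free P).1
        rw [homEval_natural, hz, map_zero]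
        ext ψ
        simp [(hδ (ψ ∘ₗ ι)).2 ⟨ψ, rfl⟩, LinearMap.lcomp_apply']
      rw [hi (h0.trans (map_zero _).symm), map_zero] at hz
      ext x
      obtain ⟨φ, rfl⟩ := hδs x
      exact (LinearMap.congr_fun hz φ).symm
    · intro hT
      rw [injective_iff_map_eq_zero]
      intro z hz
      have h0 := homEval_natural (C := C) (J := J) ι z
      rw [hz, map_zero] at h0
      have hex : Function.Exact (ι.lcomp R C) δ := hδ
      obtain ⟨T, hT'⟩ := inj_of_exact hex _ h0.symm
      apply homEval_bij.1
      rw [← hT', Subsingleton.elim T 0, map_zero, LinearMap.zero_comp]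
  | more i _ ih =>
    intro N _ _ _
    obtain ⟨P, _, _, g, _, _, hg⟩ := exists_fin_cover R N
    have hs := SES.ofSurj hg
    have : Module.Injective R (CharacterModule P) :=
      Module.Flat.iff_characterModule_injective.1 inferInstance
    obtain ⟨e⟩ := hs.dual.shift' (n := i) (Y := C →ₗ[R] J) inferInstance inferInstance
    obtain ⟨e'⟩ := hs.shift (n := i) (Y := C) inferInstance inferInstance
    rw [← e.toEquiv.subsingleton_congr, ih]
    exact (e'.congrLeft J R).toEquiv.subsingleton_congr

end HomEval

end

end DualBass

/-! ### Auslander and Bass classes of a semidualizing module -/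

namespace DualBass

noncomputable section

open scoped TensorProduct

section BassClass

variable {R : Type u} [CommRing R]

/-- The semidualizing condition, phrased with the derived-category `Ext`. -/
structure SD (R C : Type u) [CommRing R] [AddCommGroup C] [Module R C] : Prop where
  fin : Module.Finite R C
  bij : Function.Bijective (fun r : R => r • (LinearMap.id : C →ₗ[R] C))
  ext : ∀ i, Subsingleton (E R C C (i + 1))

lemma isSemidualizing_iff (C : Type u) [AddCommGroup C] [Module R C] :
    IsSemidualizing R C ↔ SD R C := by
  constructor
  · rintro ⟨h1, h2, h3⟩
    exact ⟨h1, h2, fun i ↦ (extM_subsingleton_iff i).1 (h3 _ i.succ_pos)⟩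
  · rintro ⟨h1, h2, h3⟩
    refine ⟨h1, h2, fun i hi ↦ ?_⟩
    obtain ⟨i, rfl⟩ := Nat.exists_eq_succ_of_ne_zero hi.ne'
    exact (extM_subsingleton_iff i).2 (h3 i)

variable {C : Type u} [AddCommGroup C] [Module R C]

lemma SD.eq_zero (hC : SD R C) {r : R} (hr : ∀ c : C, r • c = 0) : r = 0 :=
  hC.bij.1 (LinearMap.ext fun c ↦ by simp [hr c])

/-- A semidualizing module is faithful for tensor products. -/
lemma SD.faithful [IsNoetherianRing R] (hC : SD R C) (X : Type u) [AddCommGroup X] [Module R X]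
    (h : Subsingleton (X ⊗[R] C)) : Subsingleton X := by
  have := hC.fin
  by_contra hX
  obtain ⟨x, hx⟩ : ∃ x : X, x ≠ 0 := by
    by_contra! h0
    exact hX ((subsingleton_iff_forall_eq 0).2 h0)
  obtain ⟨χ, hχ⟩ := CharacterModule.exists_character_apply_ne_zero_of_ne_zero hx
  have hC' : Subsingleton (C →ₗ[R] CharacterModule X) := by
    refine ⟨fun a b ↦ CharacterModule.homEquiv.injective ?_⟩
    have : Subsingleton (C ⊗[R] X) := (TensorProduct.comm R C X).toEquiv.subsingleton
    ext z
    rw [Subsingleton.elim z 0, map_zero, map_zero]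
  let L := Submodule.span R {χ}
  have hL : Subsingleton (C →ₗ[R] L) := by
    refine ⟨fun a b ↦ LinearMap.ext fun c ↦ Subtype.ext ?_⟩
    exact LinearMap.congr_fun (Subsingleton.elim (L.subtype ∘ₗ a) (L.subtype ∘ₗ b)) c
  obtain ⟨r, hr, hreg⟩ := IsSMulRegular.subsingleton_linearMap_iff.1 hL
  have hr0 : r = 0 := hC.eq_zero fun c ↦ Module.mem_annihilator.1 hr c
  have : (⟨χ, Submodule.mem_span_singleton_self χ⟩ : L) = 0 := hreg (by simp [hr0])
  apply hχ
  rw [show χ = 0 from congrArg Subtype.val this]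
  rfl

lemma SD.surj [IsNoetherianRing R] (hC : SD R C) {X Y : Type u} [AddCommGroup X] [Module R X]
    [AddCommGroup Y] [Module R Y] (f : X →ₗ[R] Y) (h : Function.Surjective (f.rTensor C)) :
    Function.Surjective f := by
  have hs : Subsingleton ((Y ⧸ LinearMap.range f) ⊗[R] C) := by
    rw [subsingleton_iff_forall_eq 0]
    intro z
    obtain ⟨w, rfl⟩ := LinearMap.rTensor_surjective C (LinearMap.range f).mkQ_surjective z
    obtain ⟨v, rfl⟩ := h w
    rw [← LinearMap.comp_apply, ← LinearMap.rTensor_comp, LinearMap.range_mkQ_comp]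
    simp
  have := hC.faithful _ hs
  rw [← LinearMap.range_eq_top]
  exact Submodule.Quotient.subsingleton_iff.1 this

/-- The evaluation map `Hom(C, N) ⊗ C → N`. -/
def evC (C N : Type u) [AddCommGroup C] [Module R C] [AddCommGroup N] [Module R N] :
    (C →ₗ[R] N) ⊗[R] C →ₗ[R] N := TensorProduct.lift LinearMap.id

@[simp] lemma evC_tmul {N : Type u} [AddCommGroup N] [Module R N] (f : C →ₗ[R] N) (c : C) :
    evC C N (f ⊗ₜ c) = f c := rfl

/-- Postcomposition `Hom(C, A) → Hom(C, B)`. -/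
abbrev pc (C : Type u) [AddCommGroup C] [Module R C] {A B : Type u} [AddCommGroup A] [Module R A]
    [AddCommGroup B] [Module R B] (f : A →ₗ[R] B) : (C →ₗ[R] A) →ₗ[R] (C →ₗ[R] B) :=
  LinearMap.compRight R f

lemma evC_natural {A B : Type u} [AddCommGroup A] [Module R A]
    [AddCommGroup B] [Module R B] (f : A →ₗ[R] B) (z : (C →ₗ[R] A) ⊗[R] C) :
    evC C B ((pc C f).rTensor C z) = f (evC C A z) := by
  induction z with
  | zero => simp
  | add x y hx hy => simp only [map_add, hx, hy]
  | tmul a b => rfl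

/-- `Ext^j(-, N) = 0` for all `j > n`. -/
def IdLE (n : ℕ) (N : Type u) [AddCommGroup N] [Module R N] : Prop :=
  ∀ (L : Type u) [AddCommGroup L] [Module R L] (j : ℕ), n ≤ j → Subsingleton (E R L N (j + 1))

lemma IdLE.injective {N : Type u} [AddCommGroup N] [Module R N] (h : IdLE (R := R) 0 N) :
    Module.Injective R N := by
  refine ⟨fun X Y _ _ _ _ f hf g ↦ ?_⟩
  have := h (Y ⧸ LinearMap.range f) 0 le_rfl
  obtain ⟨δ, hδ, -⟩ := (SES.ofInj hf).ext_one N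
  obtain ⟨ψ, hψ⟩ := (hδ g).1 (Subsingleton.elim _ _)
  exact ⟨ψ, fun x ↦ LinearMap.congr_fun hψ x⟩

lemma IdLE.cosyzygy {n : ℕ} {A I B : Type u} [AddCommGroup A] [Module R A] [AddCommGroup I]
    [Module R I] [AddCommGroup B] [Module R B] [Module.Injective R I] {f : A →ₗ[R] I}
    {g : I →ₗ[R] B} (h : SES f g) (hA : IdLE (R := R) (n + 1) A) : IdLE (R := R) n B :=
  fun L _ _ j hj ↦ h.sub_right' inferInstance (hA L (j + 1) (by lia))

lemma pc_left_exact {A I B : Type u} [AddCommGroup A] [Module R A] [AddCommGroup I]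
    [Module R I] [AddCommGroup B] [Module R B] {f : A →ₗ[R] I} {g : I →ₗ[R] B} (h : SES f g) :
    Function.Injective (pc C f) ∧ Function.Exact (pc C f) (pc C g) := by
  refine ⟨fun a b hab ↦ LinearMap.ext fun c ↦ h.inj (LinearMap.congr_fun hab c), fun φ ↦ ?_⟩
  constructor
  · intro hφ
    have h1 : ∀ c, ∃ a, f a = φ c := fun c ↦ (h.exact _).1 (LinearMap.congr_fun hφ c)
    let e := LinearEquiv.ofInjective f h.inj
    refine ⟨e.symm.toLinearMap ∘ₗ φ.codRestrict (LinearMap.range f) h1, LinearMap.ext fun c ↦ ?_⟩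
    exact congrArg Subtype.val (e.apply_symm_apply (φ.codRestrict (LinearMap.range f) h1 c))
  · rintro ⟨ψ, rfl⟩
    ext c
    exact h.exact.apply_apply_eq_zero _

/-- Injective modules lie in the Bass class of `C`; this dualizes `Hom(C, C) = R` and
`Ext^i(C, C) = 0`. -/
lemma SD.bass_zero [IsNoetherianRing R] (hC : SD R C) (I : Type u) [AddCommGroup I] [Module R I]
    [Module.Injective R I] : Function.Bijective (evC (R := R) C I) ∧
      ∀ i, Subsingleton (E R (C →ₗ[R] I) (CharacterModule C) (i + 1)) := by
  have := hC.fin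
  constructor
  · let h : R ≃ₗ[R] (C →ₗ[R] C) := LinearEquiv.ofBijective (LinearMap.toSpanSingleton R _ LinearMap.id)
      (by simpa [LinearMap.toSpanSingleton] using hC.bij)
    let e := (TensorProduct.comm R (C →ₗ[R] I) C).trans
      ((LinearEquiv.ofBijective (homEval C C I) homEval_bij).trans
        ((h.symm.congrLeft I R).trans (LinearMap.ringLmapEquivSelf R R I)))
    have : (evC (R := R) C I) = e.toLinearMap := by
      ext f c
      simp [e, h, LinearEquiv.congrLeft]
    rw [this]
    exact e.bijective
  · intro i
    rw [tor_hom_iff]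
    have := hC.ext i
    exact ⟨fun a b ↦ LinearMap.ext fun x ↦ by rw [Subsingleton.elim x 0, map_zero, map_zero]⟩

/-- `0 → Hom(C, A) → Hom(C, I) → Hom(C, B) → 0` is exact when evaluation is bijective for `I`
and `B`, because the cokernel on the right is killed by tensoring with `C`. -/
lemma SD.pc_ses [IsNoetherianRing R] (hC : SD R C) {A I B : Type u} [AddCommGroup A] [Module R A]
    [AddCommGroup I] [Module R I] [AddCommGroup B] [Module R B] {f : A →ₗ[R] I} {g : I →ₗ[R] B}
    (h : SES f g) (hI : Function.Bijective (evC (R := R) C I))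
    (hB : Function.Bijective (evC (R := R) C B)) : SES (pc C f) (pc C g) := by
  refine ⟨(pc_left_exact h).1, hC.surj _ fun z ↦ ?_, (pc_left_exact h).2⟩
  obtain ⟨i, hi⟩ := h.surj (evC C B z)
  obtain ⟨w, rfl⟩ := hI.2 i
  exact ⟨w, hB.1 (by rw [evC_natural, hi])⟩

/-- Modules of finite injective dimension lie in the Bass class of `C`. -/
lemma SD.bass [IsNoetherianRing R] (hC : SD R C) (n : ℕ) : ∀ (N : Type u) [AddCommGroup N]
    [Module R N], IdLE (R := R) n N → Function.Bijective (evC (R := R) C N) ∧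
      ∀ i, Subsingleton (E R (C →ₗ[R] N) (CharacterModule C) (i + 1)) := by
  induction n with
  | zero =>
    intro N _ _ hN
    have := hN.injective
    exact hC.bass_zero N
  | succ n ih =>
    intro N _ _ hN
    obtain ⟨I, _, _, f, _, hf⟩ := exists_inj_embed R N
    have h := SES.ofInj hf
    have hI := hC.bass_zero I
    have hB := ih _ (hN.cosyzygy h)
    have hs := hC.pc_ses h hI.1 hB.1
    refine ⟨⟨?_, ?_⟩, fun i ↦ hs.sub_left (hI.2 i) (hB.2 (i + 1))⟩
    · rw [injective_iff_map_eq_zero]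
      intro z hz
      apply hs.rTensor_inj (hB.2 0)
      apply hI.1.1
      rw [evC_natural, hz]
      simp
    · intro y
      obtain ⟨z, hz⟩ := hI.1.2 (f y)
      have h0 : (pc C (LinearMap.range f).mkQ).rTensor C z = 0 := by
        apply hB.1.1
        rw [evC_natural, hz, map_zero, h.exact.apply_apply_eq_zero]
      obtain ⟨w, rfl⟩ := (rTensor_exact C hs.exact hs.surj z).1 h0
      exact ⟨w, h.inj (by rw [← evC_natural, hz])⟩

/-- A module `M` with `C ⊗ M` of finite injective dimension is `Hom(C, C ⊗ M)`. -/
lemma SD.auslander [IsNoetherianRing R] (hC : SD R C) {n : ℕ} (M : Type u) [AddCommGroup M]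
    [Module R M] (h : IdLE (R := R) n (C ⊗[R] M)) :
    Function.Bijective ((TensorProduct.mk R C M).flip) := by
  set η := (TensorProduct.mk R C M).flip
  have hB := hC.bass n _ h
  have hcomp : evC C (C ⊗[R] M) ∘ₗ η.rTensor C = (TensorProduct.comm R M C).toLinearMap := by
    ext m c; rfl
  have hb : Function.Bijective (η.rTensor C) := by
    have : Function.Bijective (evC C (C ⊗[R] M) ∘ₗ η.rTensor C) := by
      rw [hcomp]; exact (TensorProduct.comm R M C).bijective
    exact (Function.Bijective.of_comp_iff' hB.1 _).1 this
  have hs := hC.surj η hb.2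
  refine ⟨?_, hs⟩
  have hK := (SES.ofSurj hs).rTensor_inj (hB.2 0)
  have : Subsingleton (LinearMap.ker η) := by
    apply hC.faithful
    rw [subsingleton_iff_forall_eq 0]
    intro z
    apply hK
    apply hb.1
    rw [← LinearMap.comp_apply, ← LinearMap.rTensor_comp, LinearMap.comp_ker_subtype]
    simp
  rw [← LinearMap.ker_eq_bot]
  exact (Submodule.subsingleton_iff_eq_bot).1 this

end BassClass

end

end DualBass

/-! ### Local vanishing of `Ext^i(N, C)` -/

namespace DualBass

noncomputable section

open scoped TensorProduct

section Local

variable {R : Type u} [CommRing R] {C : Type u} [AddCommGroup C] [Module R C]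

variable (C) in
/-- `Ext^i_R(N, C)` vanishes after localization at `q`. -/
def LV (q : Ideal R) [q.IsPrime] (i : ℕ) (N : Type u) [AddCommGroup N] [Module R N] : Prop :=
  IsTors q.primeCompl (E R N C i)

variable {q : Ideal R} [q.IsPrime] {i : ℕ}
variable {N N' : Type u} [AddCommGroup N] [Module R N] [AddCommGroup N'] [Module R N']

lemma ext_smul_zero {r : R} (hr : ∀ x : N, r • x = 0) (e : E R N C i) : r • e = 0 := by
  have : r • (LinearMap.id : N →ₗ[R] N) = (0 : R) • LinearMap.id := by
    ext x
    simp [hr]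
  rw [← pre_smul r i e, this, pre_smul, zero_smul]

lemma LV.of_ann {r : R} (hr : r ∉ q) (h : ∀ x : N, r • x = 0) : LV C q i N :=
  fun e ↦ ⟨r, hr, ext_smul_zero h e⟩

lemma LV.of_tors [Module.Finite R N] (h : IsTors q.primeCompl N) : LV C q i N := by
  obtain ⟨s, hs, h⟩ := h.exists_smul
  exact .of_ann hs h

lemma LV.congr (e : N ≃ₗ[R] N') : LV C q i N ↔ LV C q i N' :=
  (isTors_congr (preEquiv e C i)).symm

/-- A dévissage of a finitely generated module into cyclic modules `R/p`. -/
lemma LV.devissage [IsNoetherianRing R] (I : Ideal R)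
    (H : ∀ p : Ideal R, p.IsPrime → I ≤ p → p ≤ q → LV C q i (R ⧸ p)) [hN : Module.Finite R N]
    (hI : ∀ x ∈ I, ∀ n : N, x • n = 0) : LV C q i N := by
  revert hI
  induction hN using IsNoetherianRing.induction_on_isQuotientEquivQuotientPrime R with
  | subsingleton N =>
    intro _
    exact .of_ann (r := 1) ((Ideal.ne_top_iff_one q).1 (Ideal.IsPrime.ne_top inferInstance))
      fun x ↦ Subsingleton.elim _ _
  | quotient N p e =>
    intro hI
    rw [LV.congr e]
    by_cases hpq : p.1 ≤ q
    · refine H p.1 p.2 (fun x hx ↦ ?_) hpq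
      have := congrArg e (hI x hx (e.symm (Ideal.Quotient.mk p.1 1)))
      rw [map_smul, e.apply_symm_apply, map_zero, Algebra.smul_def, map_one, mul_one] at this
      exact Ideal.Quotient.eq_zero_iff_mem.1 this
    · obtain ⟨r, hr, hrq⟩ := Set.not_subset.1 hpq
      refine .of_ann hrq fun x ↦ ?_
      rw [Algebra.smul_def, Ideal.Quotient.algebraMap_eq, Ideal.Quotient.eq_zero_iff_mem.2 hr,
        zero_mul]
  | exact N₁ N₂ N₃ f g hf hg hfg h₁ h₃ =>
    intro hI
    refine (SES.mk hf hg hfg).tors_mid (h₃ fun x hx n ↦ ?_) (h₁ fun x hx n ↦ hf ?_)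
    · obtain ⟨n, rfl⟩ := hg n
      rw [← map_smul, hI x hx, map_zero]
    · rw [map_smul, hI x hx, map_zero]

/-- Nakayama's lemma: a finitely generated module vanishing locally at `q` modulo `q` vanishes
locally at `q`. -/
lemma tors_of_smul_mem [Module.Finite R N] {s : R} (hs : s ∉ q)
    (h : ∀ n : N, s • n ∈ (q • ⊤ : Submodule R N)) : IsTors q.primeCompl N := by
  obtain ⟨p, hp, -, hc, h0⟩ :=
    LinearMap.exists_monic_and_natDegree_eq_and_coeff_mem_pow_and_aeval_eq_zero R
      (algebraMap R (Module.End R N) s) q (by rintro _ ⟨n, rfl⟩; exact h n)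
  rw [Polynomial.aeval_algebraMap_apply] at h0
  refine fun n ↦ ⟨Polynomial.aeval s p, fun ht ↦ hs ?_, LinearMap.congr_fun h0 n⟩
  rw [hp.as_sum] at ht
  simp only [map_add, map_sum, map_mul, map_pow, Polynomial.aeval_X, Polynomial.aeval_C] at ht
  refine Ideal.IsPrime.mem_of_pow_mem inferInstance p.natDegree ((Ideal.add_mem_iff_left q ?_).1 ht)
  refine Ideal.sum_mem q fun k hk ↦ Ideal.mul_mem_right _ _ ?_
  exact Ideal.pow_le_self (Nat.sub_ne_zero_of_lt (Finset.mem_range.1 hk)) (hc k)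

/-- If `Ext^{i+1}(R/p, C)` vanishes at `q` for the primes `p` strictly between `r` and `q`
(`q` included), then `Ext^i(R/r, C)` vanishes at `q`. -/
lemma LV.descend [IsNoetherianRing R] [Module.Finite R C] (r : Ideal R) [r.IsPrime] (hrq : r < q)
    (H : ∀ p : Ideal R, p.IsPrime → r < p → p ≤ q → LV C q (i + 1) (R ⧸ p)) :
    LV C q i (R ⧸ r) := by
  obtain ⟨x, hxq, hxr⟩ := Set.exists_of_ssubset hrq
  let f : (R ⧸ r) →ₗ[R] (R ⧸ r) := x • LinearMap.id
  have hf : Function.Injective f := by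
    rw [injective_iff_map_eq_zero]
    intro y hy
    have hy : Ideal.Quotient.mk r x * y = 0 := hy
    rcases mul_eq_zero.1 hy with h | h
    · exact absurd (Ideal.Quotient.eq_zero_iff_mem.1 h) hxr
    · exact h
  have hs := SES.ofInj hf
  have hT : LV C q (i + 1) ((R ⧸ r) ⧸ LinearMap.range f) := by
    refine .devissage (r ⊔ Ideal.span {x}) (fun p hp hp' hpq ↦ H p hp ?_ hpq) ?_
    · refine lt_of_le_of_ne (le_sup_left.trans hp') ?_
      rintro rfl
      exact hxr (hp' (Ideal.mem_sup_right (Ideal.mem_span_singleton_self x)))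
    · intro y hy n
      obtain ⟨n, rfl⟩ := hs.surj n
      obtain ⟨a, ha, b, hb, rfl⟩ := Submodule.mem_sup.1 hy
      obtain ⟨c, rfl⟩ := Ideal.mem_span_singleton'.1 hb
      rw [← map_smul, ← LinearMap.mem_ker, Submodule.ker_mkQ, add_smul]
      refine add_mem ?_ ⟨c • n, by rw [LinearMap.smul_apply, LinearMap.id_apply, mul_smul, smul_comm]⟩
      rw [Algebra.smul_def, Ideal.Quotient.algebraMap_eq, Ideal.Quotient.eq_zero_iff_mem.2 ha,
        zero_mul]
      exact zero_mem _
  obtain ⟨δ, -, b, -⟩ := les_contra hs.inj hs.surj hs.exact C i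
  have key : ∀ e : E R (R ⧸ r) C i, ∃ s ∈ q.primeCompl, s • e ∈ (q • ⊤ : Submodule R _) := by
    intro e
    obtain ⟨s, hsq, h⟩ := hT (δ e)
    rw [← map_smul] at h
    obtain ⟨e', he'⟩ := (b _).1 h
    refine ⟨s, hsq, ?_⟩
    rw [← he', pre_smul]
    exact Submodule.smul_mem_smul hxq trivial
  have key2 : IsTors q.primeCompl (E R (R ⧸ r) C i ⧸ (q • ⊤ : Submodule R (E R (R ⧸ r) C i))) := by
    intro z
    obtain ⟨e, rfl⟩ := Submodule.mkQ_surjective _ z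
    obtain ⟨s, hs, h⟩ := key e
    refine ⟨s, hs, ?_⟩
    rw [← map_smul, ← LinearMap.mem_ker, Submodule.ker_mkQ]
    exact h
  obtain ⟨s, hs, h⟩ := key2.exists_smul
  refine tors_of_smul_mem hs fun n ↦ ?_
  rw [← Submodule.ker_mkQ (q • ⊤ : Submodule R (E R (R ⧸ r) C i)), LinearMap.mem_ker, map_smul]
  exact h _

/-- If `Ext^i(R/q, C)` vanishes at `q` for all `i > s`, so does `Ext^i(N, C)` for all finitely
generated `N`. -/
lemma LV.bounded [IsNoetherianRing R] [Module.Finite R C] (s : ℕ)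
    (H : ∀ i, s < i → LV C q i (R ⧸ q)) (hi : s < i) [Module.Finite R N] : LV C q i N := by
  suffices K : ∀ r : Ideal R, r.IsPrime → r ≤ q → ∀ i, s < i → LV C q i (R ⧸ r) by
    exact .devissage ⊥ (fun p hp _ hpq ↦ K p hp hpq i hi) (by simp)
  intro r
  induction r using WellFoundedGT.induction with
  | ind r ih =>
    intro hr hrq i hi
    rcases hrq.eq_or_lt with rfl | hlt
    · exact H i hi
    · exact .descend r hlt fun p hp hrp hpq ↦ ih p hrp hp hpq _ (by omega)

lemma LV.mono {p : Ideal R} [p.IsPrime] (hpq : p ≤ q) (h : LV C q i N) : LV C p i N :=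
  IsTors.mono h fun _ hx hxp ↦ hx (hpq hxp)

/-- `Ext^{ht q}(R/q, C)` does not vanish at `q`. -/
lemma SD.not_LV_height [IsNoetherianRing R] (hC : SD R C) :
    ∀ (h : ℕ) (q : Ideal R) [hq : q.IsPrime], Order.height (⟨q, hq⟩ : PrimeSpectrum R) = h →
      ¬ LV C q h (R ⧸ q) := by
  have := hC.fin
  intro h
  induction h with
  | zero =>
    intro q hq hh hLV
    rw [Nat.cast_zero, Order.height_eq_zero, PrimeSpectrum.isMin_iff] at hh
    have hann : Module.annihilator R C = ⊥ := by
      rw [eq_bot_iff]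
      intro r hr
      exact hC.eq_zero fun c ↦ Module.mem_annihilator.1 hr c
    have hass : q ∈ associatedPrimes R C := by
      refine Module.associatedPrimes.minimalPrimes_annihilator_subset_associatedPrimes R C ?_
      rw [hann]
      exact hh
    obtain ⟨-, c, hc⟩ := isAssociatedPrime_iff.1 hass
    have hc' : ∀ r : R, r ∈ q ↔ r • c = 0 := by
      intro r
      rw [hc, Submodule.mem_colon_singleton, Submodule.mem_bot]
    let φ : (R ⧸ q) →ₗ[R] C := Submodule.liftQ q (LinearMap.toSpanSingleton R C c) (by
      intro r hr
      exact (hc' r).1 hr)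
    obtain ⟨s, hs, h0⟩ := hLV (e0.symm φ)
    rw [← map_smul, LinearEquiv.map_eq_zero_iff] at h0
    refine hs ((hc' s).2 ?_)
    have := LinearMap.congr_fun h0 (Ideal.Quotient.mk q 1)
    have h1 : φ (Ideal.Quotient.mk q 1) = c := (Submodule.liftQ_apply _ _ _).trans (one_smul R c)
    rwa [LinearMap.smul_apply, h1] at this
  | succ n ih =>
    intro q hq hh hLV
    rw [Nat.cast_add, Nat.cast_one, Order.height_eq_coe_add_one_iff] at hh
    obtain ⟨-, ⟨⟨p, hp⟩, hpq, hpn⟩, hmax⟩ := hh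
    have hpq : p < q := hpq
    refine ih p hpn (LV.mono (q := q) hpq.le (.descend p hpq fun p' hp' h1 h2 ↦ ?_))
    rcases h2.eq_or_lt with rfl | hlt
    · exact hLV
    · have h3 := hmax ⟨p', hp'⟩ hlt
      have h4 : Order.height (⟨p, hp⟩ : PrimeSpectrum R) <
          Order.height (⟨p', hp'⟩ : PrimeSpectrum R) :=
        Order.height_strictMono h1 (by rw [hpn]; exact ENat.natCast_lt_top n)
      rw [hpn] at h4
      exact absurd h4 (not_lt.2 h3)

end Local

end

end DualBass

/-! ### Concentration of `Ext^i(R/q, C)` in degree `ht q` -/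

namespace DualBass

noncomputable section

open scoped TensorProduct

section Unique

variable {R : Type u} [CommRing R] {C : Type u} [AddCommGroup C] [Module R C]

lemma SD.ext_pi (hC : SD R C) (i n : ℕ) : Subsingleton (E R (Fin n → C) C (i + 1)) := by
  induction n with
  | zero => exact ⟨fun a b ↦ by
      rw [← one_smul R a, ← one_smul R b, ext_smul_zero fun _ ↦ Subsingleton.elim _ _,
        ext_smul_zero fun _ ↦ Subsingleton.elim _ _]⟩
  | succ n ih =>
    refine SES.sub_mid (f := LinearMap.single R (fun _ : Fin (n + 1) ↦ C) 0)
      (g := LinearMap.funLeft R C Fin.succ) ⟨?_, ?_, ?_⟩ ih (hC.ext i)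
    · exact Pi.single_injective (M := fun _ : Fin (n + 1) ↦ C) 0
    · exact fun x ↦ ⟨Fin.cons 0 x, by ext k; simp [LinearMap.funLeft_apply]⟩
    · intro x
      constructor
      · intro hx
        refine ⟨x 0, ?_⟩
        ext k
        refine Fin.cases (by simp) (fun k ↦ ?_) k
        simpa [LinearMap.funLeft_apply] using (congrFun hx k).symm
      · rintro ⟨c, rfl⟩
        ext k
        simp [LinearMap.funLeft_apply]

lemma SD.ext_hom_free (hC : SD R C) (P : Type u) [AddCommGroup P] [Module R P] [Module.Free R P]
    [Module.Finite R P] (i : ℕ) : Subsingleton (E R (P →ₗ[R] C) C (i + 1)) := by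
  rcases subsingleton_or_nontrivial R with _ | _
  · exact Module.subsingleton R _
  · have b := Module.finBasis R P
    have := hC.ext_pi i (Module.finrank R P)
    exact (preEquiv (b.constr R).symm C (i + 1)).symm.toEquiv.subsingleton

variable {q : Ideal R} [q.IsPrime]

variable (C) in
/-- The inductive data for locating the first `t` where `Ext^t(X, C)` does not vanish at `q`:
a syzygy `K` of `X` together with a submodule `B` of `Hom(K, C)` with
`Hom(K, C)/B ≅ Ext^t(X, C)`, all of whose `Ext^j(B, C)`, `j ≥ t`, vanish at `q`. -/
def Syz (q : Ideal R) [q.IsPrime] (X : Type u) [AddCommGroup X] [Module R X] (t : ℕ) : Prop :=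
  ∃ (K : Type u) (_ : AddCommGroup K) (_ : Module R K) (B : Submodule R (K →ₗ[R] C)),
    Module.Finite R K ∧ (∀ j, t ≤ j → LV C q j B) ∧
    Nonempty (((K →ₗ[R] C) ⧸ B) ≃ₗ[R] E R X C t) ∧
    ∀ i j, i + t = j → Nonempty (E R K C (i + 1) ≃ₗ[R] E R X C (j + 1))

lemma Syz.zero (X : Type u) [AddCommGroup X] [Module R X] [Module.Finite R X] : Syz C q X 0 := by
  refine ⟨X, _, _, ⊥, ‹_›, fun j _ ↦ ?_, ⟨Submodule.quotEquivOfEqBot ⊥ rfl ≪≫ₗ e0.symm⟩, ?_⟩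
  · exact .of_ann (r := 1) ((Ideal.ne_top_iff_one q).1 (Ideal.IsPrime.ne_top inferInstance))
      fun x ↦ Subsingleton.elim _ _
  · rintro i _ rfl
    exact ⟨.refl _ _⟩

variable [IsNoetherianRing R]

lemma Syz.succ (hC : SD R C) {X : Type u} [AddCommGroup X] [Module R X] {t : ℕ}
    (h : Syz C q X t) (ht : LV C q t X) : Syz C q X (t + 1) := by
  have := hC.fin
  obtain ⟨K, _, _, B, hK, hB, ⟨e⟩, hE⟩ := h
  obtain ⟨P, _, _, g, _, _, hg⟩ := exists_fin_cover R K
  have hs := SES.ofSurj hg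
  have hl := lcomp_exact (C := C) hs
  have hs2 : SES (g.lcomp R C) (((LinearMap.ker g).subtype.lcomp R C).rangeRestrict) := by
    refine ⟨?_, LinearMap.surjective_rangeRestrict _, ?_⟩
    · intro a b hab
      ext k
      obtain ⟨x, rfl⟩ := hg k
      exact LinearMap.congr_fun hab x
    · intro x
      rw [← hl x]
      exact Subtype.ext_iff
  obtain ⟨δ, hδ, hδ2⟩ := hs.ext_one C
  refine ⟨LinearMap.ker g, _, _, LinearMap.range ((LinearMap.ker g).subtype.lcomp R C),
    inferInstance, ?_, ?_, ?_⟩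
  · intro j hj
    obtain ⟨j, rfl⟩ : ∃ j', j = j' + 1 := ⟨j - 1, by omega⟩
    have hq : LV C q j ((K →ₗ[R] C) ⧸ B) := .of_tors ((isTors_congr e).2 ht)
    have hh : LV C q j (K →ₗ[R] C) := (SES.ofSub B).tors_mid hq (hB j (by omega))
    have := hC.ext_hom_free P j
    exact hs2.tors_right hh (.of_subsingleton _)
  · have hδs : Function.Surjective δ := fun x ↦ (hδ2 x).1 (Subsingleton.elim _ _)
    have hk : LinearMap.range ((LinearMap.ker g).subtype.lcomp R C) = LinearMap.ker δ := by
      ext φ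
      rw [LinearMap.mem_ker, hδ]
      rfl
    obtain ⟨e1⟩ := hE 0 t (by omega)
    exact ⟨Submodule.quotEquivOfEq _ _ hk ≪≫ₗ δ.quotKerEquivOfSurjective hδs ≪≫ₗ e1⟩
  · rintro i j rfl
    obtain ⟨e1⟩ := hs.shift (Y := C) (n := i) inferInstance inferInstance
    obtain ⟨e2⟩ := hE (i + 1) (i + (t + 1)) (by omega)
    exact ⟨e1 ≪≫ₗ e2⟩

/-- If `Ext^i(-, C)` vanishes at `q` for `i > s` but `Ext^s(R/q, C)` does not, then
`Ext^i(R/q, C)` vanishes at `q` for all `i < s`. -/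
lemma SD.LV_of_lt (hC : SD R C) {s : ℕ}
    (H : ∀ (N : Type u) [AddCommGroup N] [Module R N] [Module.Finite R N], ∀ i, s < i → LV C q i N)
    (hsq : ¬ LV C q s (R ⧸ q)) {t : ℕ} (ht : t < s) : LV C q t (R ⧸ q) := by
  have := hC.fin
  induction t using Nat.strong_induction_on with
  | h t ih =>
  have hS : ∀ t' ≤ t, Syz C q (R ⧸ q) t' := by
    intro t' ht'
    induction t' with
    | zero => exact .zero _
    | succ n ih' => exact (ih' (by omega)).succ hC (ih n (by omega) (by omega))
  obtain ⟨K, _, _, B, hK, hB, ⟨e⟩, -⟩ := hS t le_rfl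
  by_contra hn
  obtain ⟨P, _, _, g, _, _, hg⟩ := exists_fin_cover R K
  have hinj : Function.Injective (g.lcomp R C) := by
    intro a b hab
    ext k
    obtain ⟨x, rfl⟩ := hg k
    exact LinearMap.congr_fun hab x
  let B' := B.map (g.lcomp R C)
  have hW : LV C q s ((P →ₗ[R] C) ⧸ B') := by
    obtain ⟨s, rfl⟩ : ∃ s', s = s' + 1 := ⟨s - 1, by omega⟩
    have := hC.ext_hom_free P s
    have hB' : LV C q s B' :=
      (LV.congr (B.equivMapOfInjective _ hinj)).1 (hB s (by omega))
    exact (SES.ofSub B').tors_right hB' (.of_subsingleton _)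
  let f : ((K →ₗ[R] C) ⧸ B) →ₗ[R] ((P →ₗ[R] C) ⧸ B') :=
    B.mapQ B' (g.lcomp R C) (Submodule.map_le_iff_le_comap.1 le_rfl)
  have hf : Function.Injective f := by
    rw [← LinearMap.ker_eq_bot, Submodule.ker_mapQ, Submodule.comap_map_eq_of_injective hinj,
      ← LinearMap.le_ker_iff_map, Submodule.ker_mkQ]
  have hH : LV C q s ((K →ₗ[R] C) ⧸ B) := (SES.ofInj hf).tors_left hW (H _ _ (by omega))
  have hn' : ¬ IsTors q.primeCompl ((K →ₗ[R] C) ⧸ B) := fun h ↦ hn ((isTors_congr e).1 h)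
  unfold IsTors at hn'
  push Not at hn'
  obtain ⟨h, hh⟩ := hn'
  let φ : (R ⧸ q) →ₗ[R] ((K →ₗ[R] C) ⧸ B) :=
    Submodule.liftQ q (LinearMap.toSpanSingleton R _ h) (by
      intro r hr
      rw [LinearMap.mem_ker, LinearMap.toSpanSingleton_apply, ← e.map_eq_zero_iff, map_smul]
      refine ext_smul_zero (fun x ↦ ?_) _
      rw [Algebra.smul_def, Ideal.Quotient.algebraMap_eq, Ideal.Quotient.eq_zero_iff_mem.2 hr,
        zero_mul])
  have hφ : Function.Injective φ := by
    rw [injective_iff_map_eq_zero]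
    intro x hx
    obtain ⟨r, rfl⟩ := Ideal.Quotient.mk_surjective x
    by_contra hr
    exact hh r (fun h ↦ hr (Ideal.Quotient.eq_zero_iff_mem.2 h)) hx
  exact hsq ((SES.ofInj hφ).tors_left hH (H _ _ (by omega)))

lemma exists_primeHeight_eq (q : Ideal R) [hq : q.IsPrime] : ∃ h : ℕ, primeHeight R q = h := by
  have h : q.height = primeHeight R q := PrimeSpectrum.height_eq_orderHeight ⟨q, hq⟩
  rw [← h]
  exact ENat.ne_top_iff_exists.1 q.height_ne_top_of_isPrime |>.imp fun _ ↦ Eq.symm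

/-- If `Ext^i(R/q, C)` vanishes at `q` for large `i`, then it vanishes at `q` for every
`i ≠ ht q`. -/
lemma SD.LV_of_ne (hC : SD R C) {b : ℕ} (H : ∀ i, b < i → LV C q i (R ⧸ q)) {i : ℕ}
    (hi : (i : ℕ∞) ≠ primeHeight R q) : LV C q i (R ⧸ q) := by
  classical
  have := hC.fin
  obtain ⟨h, hh⟩ := exists_primeHeight_eq q
  have hht := hC.not_LV_height h q hh
  let s := Nat.findGreatest (fun j ↦ ¬ LV C q j (R ⧸ q)) b
  have hb : h ≤ b := by
    by_contra hb
    exact hht (H h (by omega))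
  have hs : ¬ LV C q s (R ⧸ q) :=
    Nat.findGreatest_spec (P := fun j ↦ ¬ LV C q j (R ⧸ q)) hb hht
  have hgt : ∀ i, s < i → LV C q i (R ⧸ q) := by
    intro i hi
    by_cases hib : i ≤ b
    · exact not_not.1 (Nat.findGreatest_is_greatest hi hib)
    · exact H i (by omega)
  have hlt : ∀ i, i < s → LV C q i (R ⧸ q) := fun i hi ↦
    hC.LV_of_lt (fun N _ _ _ j hj ↦ .bounded s hgt hj) hs hi
  have hsh : s = h := by
    rcases lt_trichotomy s h with h' | h' | h'
    · exact absurd (hgt h h') hht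
    · exact h'
    · exact absurd (hlt h h') hht
  rw [hh, ne_eq, Nat.cast_inj, ← hsh] at hi
  rcases lt_or_gt_of_ne hi with h' | h'
  · exact hlt i h'
  · exact hgt i h'

end Unique

end

end DualBass

/-! ### Dual Bass numbers as `Ext` -/

namespace DualBass

noncomputable section

open scoped TensorProduct

section FlatBase

section chi

variable {A : Type u} [CommRing A] (I : Ideal A)
variable {Z K P : Type u} [AddCommGroup Z] [Module A Z] [AddCommGroup K] [Module A K]
  [AddCommGroup P] [Module A P]

/-- Maps `Z → (A/I)ᵛ` correspond to characters of `Z` vanishing on `IZ`. -/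
def toChi (φ : Z →ₗ[A] CharacterModule (A ⧸ I)) : Z →+ AddCircle (1 : ℚ) where
  toFun z := φ z (Ideal.Quotient.mk I 1)
  map_zero' := by rw [map_zero]; rfl
  map_add' x y := by rw [map_add]; rfl

lemma toChi_smul (φ : Z →ₗ[A] CharacterModule (A ⧸ I)) (a : A) (z : Z) :
    toChi I φ (a • z) = φ z (Ideal.Quotient.mk I a) := by
  change φ (a • z) (Ideal.Quotient.mk I 1) = _
  rw [map_smul, CharacterModule.smul_apply, Algebra.smul_def, Ideal.Quotient.algebraMap_eq, map_one,
    mul_one]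

lemma toChi_kills (φ : Z →ₗ[A] CharacterModule (A ⧸ I)) (a : A) (ha : a ∈ I) (z : Z) :
    toChi I φ (a • z) = 0 := by
  rw [toChi_smul, Ideal.Quotient.eq_zero_iff_mem.2 ha, map_zero]

lemma toChi_injective : Function.Injective (toChi I (Z := Z)) := by
  intro φ ψ h
  ext z x
  obtain ⟨a, rfl⟩ := Ideal.Quotient.mk_surjective x
  rw [← toChi_smul, h, toChi_smul]

lemma exists_toChi (χ : Z →+ AddCircle (1 : ℚ)) (h : ∀ a ∈ I, ∀ z, χ (a • z) = 0) :
    ∃ φ, toChi I φ = χ := by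
  let φ : Z →ₗ[A] CharacterModule (A ⧸ I) :=
    { toFun z := QuotientAddGroup.lift I.toAddSubgroup
        (χ.comp (LinearMap.toSpanSingleton A Z z).toAddMonoidHom) (fun a ha ↦ h a ha z)
      map_add' x y := by
        refine DFunLike.ext _ _ fun a ↦ ?_
        obtain ⟨a, rfl⟩ := Ideal.Quotient.mk_surjective a
        change χ (a • (x + y)) = χ (a • x) + χ (a • y)
        rw [smul_add, map_add]
      map_smul' b x := by
        refine DFunLike.ext _ _ fun a ↦ ?_
        obtain ⟨a, rfl⟩ := Ideal.Quotient.mk_surjective a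
        change χ (a • b • x) = χ ((b * a) • x)
        rw [mul_comm, mul_smul] }
  refine ⟨φ, ?_⟩
  ext z
  change χ ((1 : A) • z) = χ z
  rw [one_smul]

lemma sub_hom_iff_chi : Subsingleton (Z →ₗ[A] CharacterModule (A ⧸ I)) ↔
    ∀ χ : Z →+ AddCircle (1 : ℚ), (∀ a ∈ I, ∀ z, χ (a • z) = 0) → χ = 0 := by
  constructor
  · intro _ χ h
    obtain ⟨φ, rfl⟩ := exists_toChi I χ h
    rw [Subsingleton.elim φ 0]
    rfl
  · intro h
    rw [subsingleton_iff_forall_eq 0]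
    intro φ
    refine toChi_injective I ((h _ (toChi_kills I φ)).trans ?_)
    rfl

lemma lift_iff_chi (f : K →ₗ[A] P) :
    (∀ φ : K →ₗ[A] CharacterModule (A ⧸ I), ∃ ψ : P →ₗ[A] CharacterModule (A ⧸ I), ψ ∘ₗ f = φ) ↔
    ∀ χ : K →+ AddCircle (1 : ℚ), (∀ a ∈ I, ∀ z, χ (a • z) = 0) →
      ∃ χ' : P →+ AddCircle (1 : ℚ), (∀ a ∈ I, ∀ z, χ' (a • z) = 0) ∧ ∀ k, χ' (f k) = χ k := by
  constructor
  · intro H χ h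
    obtain ⟨φ, rfl⟩ := exists_toChi I χ h
    obtain ⟨ψ, rfl⟩ := H φ
    exact ⟨toChi I ψ, toChi_kills I ψ, fun k ↦ rfl⟩
  · intro H φ
    obtain ⟨χ', h1, h2⟩ := H _ (toChi_kills I φ)
    obtain ⟨ψ, rfl⟩ := exists_toChi I χ' h1
    exact ⟨ψ, toChi_injective I (AddMonoidHom.ext h2)⟩

end chi

variable {R : Type u} [CommRing R] (B : Type u) [CommRing B] [Algebra R B] (I : Ideal R)

lemma chi_map_iff {Z : Type u} [AddCommGroup Z] [Module R Z] [Module B Z] [IsScalarTower R B Z]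
    (χ : Z →+ AddCircle (1 : ℚ)) : (∀ b ∈ I.map (algebraMap R B), ∀ z, χ (b • z) = 0) ↔
      ∀ a ∈ I, ∀ z, χ (a • z) = 0 := by
  constructor
  · intro h a ha z
    rw [← algebraMap_smul B a z]
    exact h _ (Ideal.mem_map_of_mem _ ha) z
  · intro h b hb
    induction hb using Submodule.span_induction with
    | mem x hx =>
      obtain ⟨a, ha, rfl⟩ := hx
      intro z
      rw [algebraMap_smul]
      exact h a ha z
    | zero => simp
    | add x y _ _ hx hy => intro z; rw [add_smul, map_add, hx, hy, add_zero]
    | smul c x _ hx =>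
      intro z
      rw [smul_eq_mul, mul_comm, mul_smul]
      exact hx _

lemma lift_base_iff {K P : Type u} [AddCommGroup K] [Module R K] [Module B K] [IsScalarTower R B K]
    [AddCommGroup P] [Module R P] [Module B P] [IsScalarTower R B P] (f : K →ₗ[B] P)
    (f' : K →ₗ[R] P) (hf : ∀ x, f x = f' x) :
    (∀ φ : K →ₗ[B] CharacterModule (B ⧸ I.map (algebraMap R B)), ∃ ψ, ψ ∘ₗ f = φ) ↔
      ∀ φ : K →ₗ[R] CharacterModule (R ⧸ I), ∃ ψ, ψ ∘ₗ f' = φ := by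
  rw [lift_iff_chi, lift_iff_chi]
  simp only [chi_map_iff, hf]

/-- For a flat `R`-algebra `B` and a `B`-module `Y`, the vanishing of
`Tor_i^B(B/IB, Y)` and of `Tor_i^R(R/I, Y)` are equivalent; both are phrased through `Ext` into
character modules. -/
lemma flat_base_iff [Module.Flat R B] (i : ℕ) :
    ∀ (Y : Type u) [AddCommGroup Y] [Module R Y] [Module B Y] [IsScalarTower R B Y],
      Subsingleton (E B Y (CharacterModule (B ⧸ I.map (algebraMap R B))) i) ↔
        Subsingleton (E R Y (CharacterModule (R ⧸ I)) i) := by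
  induction i with
  | zero =>
    intro Y _ _ _ _
    rw [ext_subsingleton_zero_iff, ext_subsingleton_zero_iff, sub_hom_iff_chi, sub_hom_iff_chi]
    simp only [chi_map_iff]
  | succ i ih =>
    intro Y _ _ _ _
    let g : (Y →₀ B) →ₗ[B] Y := Finsupp.linearCombination B id
    have hg : Function.Surjective g := Finsupp.linearCombination_id_surjective B Y
    have hs := SES.ofSurj hg
    let f' : LinearMap.ker g →ₗ[R] (Y →₀ B) := (LinearMap.ker g).subtype.restrictScalars R
    have hs' : SES (A := LinearMap.ker g) f' (g.restrictScalars R) :=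
      ⟨hs.inj, hs.surj, hs.exact⟩
    have hB : ∀ i, Subsingleton (E B (Y →₀ B) (CharacterModule (B ⧸ I.map (algebraMap R B)))
      (i + 1)) := fun i ↦ inferInstance
    have hfl : Module.Flat R (Y →₀ B) := Module.Flat.trans R B _
    have hR : ∀ i, Subsingleton (E R (Y →₀ B) (CharacterModule (R ⧸ I)) (i + 1)) :=
      fun i ↦ flat_ext_dual _ i _
    cases i with
    | zero =>
      rw [hs.sub_one_iff (hB 0), hs'.sub_one_iff (hR 0)]
      exact lift_base_iff B I (K := LinearMap.ker g) (LinearMap.ker g).subtype f' fun _ ↦ rfl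
    | succ i =>
      obtain ⟨e⟩ := hs.shift (hB i) (hB (i + 1))
      obtain ⟨e'⟩ := hs'.shift (hR i) (hR (i + 1))
      rw [← e.toEquiv.subsingleton_congr, ← e'.toEquiv.subsingleton_congr]
      exact ih _

lemma mLength_eq_zero_iff (R : Type u) [CommRing R] (M : Type u) [AddCommGroup M] [Module R M] :
    mLength R M = 0 ↔ Subsingleton M := by
  rw [mLength, Order.height_eq_zero, isMin_iff_eq_bot, ← Submodule.subsingleton_iff R,
    ← subsingleton_iff_bot_eq_top, eq_comm]

/-- Vanishing of a dual Bass number, as a vanishing of `Ext` over `R` itself: `Tor` over `R_p` is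
dualized to `Ext`, and flat base change removes the localization. -/
lemma dualBass_eq_zero_iff (p : Ideal R) [p.IsPrime] (i : ℕ) (M : Type u) [AddCommGroup M]
    [Module R M] : dualBassNumber R p i M = 0 ↔
      Subsingleton (E R (Localization.AtPrime p →ₗ[R] M) (CharacterModule (R ⧸ p)) i) := by
  unfold dualBassNumber
  rw [mLength_eq_zero_iff, torM_subsingleton_iff]
  have : IsScalarTower R (Localization.AtPrime p) (Localization.AtPrime p →ₗ[R] M) := by
    refine ⟨fun r s f ↦ ?_⟩
    ext x
    change f ((r • s) * x) = r • f (s * x)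
    rw [smul_mul_assoc, map_smul]
  have h := flat_base_iff (Localization.AtPrime p) p i (Localization.AtPrime p →ₗ[R] M)
  rw [Localization.AtPrime.map_eq_maximalIdeal] at h
  exact h

end FlatBase

end

end DualBass

/-! ### The window for dual Bass numbers -/

namespace DualBass

noncomputable section

open scoped TensorProduct

section Window

variable {R : Type u} [CommRing R]

/-- Interchanging the two arguments of `Hom(B, Hom(C, I))`. -/
def flipEquiv (B C I : Type u) [AddCommGroup B] [Module R B] [AddCommGroup C] [Module R C]
    [AddCommGroup I] [Module R I] : (B →ₗ[R] C →ₗ[R] I) ≃ₗ[R] (C →ₗ[R] B →ₗ[R] I) :=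
  LinearMap.lflip

/-- Hom from a flat module to an injective one is injective, by the tensor-hom adjunction. -/
lemma injective_hom (B I : Type u) [AddCommGroup B] [Module R B] [Module.Flat R B]
    [AddCommGroup I] [Module R I] [Module.Injective R I] : Module.Injective R (B →ₗ[R] I) := by
  refine ⟨fun X Y _ _ _ _ f hf g ↦ ?_⟩
  obtain ⟨h, hh⟩ := Module.Injective.out (f.rTensor B)
    (Module.Flat.rTensor_preserves_injective_linearMap f hf) (TensorProduct.lift g)
  refine ⟨TensorProduct.curry h, fun x ↦ ?_⟩
  ext b
  exact hh (x ⊗ₜ b)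

/-- The kernel of a surjection between flat modules is flat. -/
lemma SES.flat {A P F : Type u} [AddCommGroup A] [Module R A] [AddCommGroup P] [Module R P]
    [AddCommGroup F] [Module R F] {f : A →ₗ[R] P} {g : P →ₗ[R] F} (h : SES f g)
    [Module.Flat R P] [Module.Flat R F] : Module.Flat R A := by
  rw [Module.Flat.iff_characterModule_injective]
  have hF : Module.Injective R (CharacterModule F) :=
    Module.Flat.iff_characterModule_injective.1 inferInstance
  have hP : Module.Injective R (CharacterModule P) :=
    Module.Flat.iff_characterModule_injective.1 inferInstance
  exact IdLE.injective fun L _ _ j _ ↦ h.dual.sub_right' (Y := L) inferInstance inferInstance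

/-- `M` is cotorsion, phrased through the derived category `Ext`. -/
def Cotor (M : Type u) [AddCommGroup M] [Module R M] : Prop :=
  ∀ (F : Type u) [AddCommGroup F] [Module R F], Module.Flat R F → Subsingleton (E R F M 1)

/-- The first syzygy of a flat module is flat, so `Ext^2(F, M) = Ext^1(K, M) = 0`. -/
lemma Cotor.two {M : Type u} [AddCommGroup M] [Module R M] (h : Cotor (R := R) M) (F : Type u)
    [AddCommGroup F] [Module R F] (hF : Module.Flat R F) : Subsingleton (E R F M 2) := by
  obtain ⟨P, _, _, g, _, hg⟩ := exists_free_cover R F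
  have hs := SES.ofSurj hg
  exact hs.sub_right (h _ hs.flat) inferInstance

/-- `Hom(B, -)` keeps a short exact sequence exact when `B` is flat and the kernel is cotorsion. -/
lemma Cotor.hom_ses (B : Type u) [AddCommGroup B] [Module R B] [hB : Module.Flat R B]
    {A I X : Type u} [AddCommGroup A] [Module R A] [AddCommGroup I] [Module R I] [AddCommGroup X]
    [Module R X] {f : A →ₗ[R] I} {g : I →ₗ[R] X} (h : SES f g) (hA : Cotor (R := R) A) :
    SES (pc B f) (pc B g) := by
  refine ⟨(pc_left_exact h).1, fun φ ↦ ?_, (pc_left_exact h).2⟩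
  obtain ⟨δ, hδ, -⟩ := h.ext_one' B
  have := hA B hB
  exact (hδ φ).1 (Subsingleton.elim _ _)

/-- Torsion modules have no nonzero maps to `Hom(R_p, I)`. -/
lemma subsingleton_hom_of_tors (p : Ideal R) [p.IsPrime] {Z : Type u} [AddCommGroup Z] [Module R Z]
    (hZ : IsTors p.primeCompl Z) (I : Type u) [AddCommGroup I] [Module R I] :
    Subsingleton (Z →ₗ[R] Localization.AtPrime p →ₗ[R] I) := by
  rw [subsingleton_iff_forall_eq 0]
  intro φ
  ext z b
  obtain ⟨s, hs, h⟩ := hZ z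
  have hb : s • (IsLocalization.mk' (Localization.AtPrime p) 1 (⟨s, hs⟩ : p.primeCompl) * b) = b := by
    rw [← smul_mul_assoc, Algebra.smul_def, IsLocalization.mk'_spec'_mk, map_one, one_mul]
  rw [← hb, map_smul, ← LinearMap.smul_apply, ← map_smul, h]
  simp

/-- A finitely generated module without nonzero maps to `Hom(R_p, Rᵛ)` vanishes at `p`. -/
lemma tors_of_subsingleton_hom (p : Ideal R) [p.IsPrime] {Z : Type u} [AddCommGroup Z] [Module R Z]
    (h : Subsingleton (Z →ₗ[R] Localization.AtPrime p →ₗ[R] CharacterModule R)) :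
    IsTors p.primeCompl Z := by
  have h1 : Subsingleton (CharacterModule ((Z ⊗[R] Localization.AtPrime p) ⊗[R] R)) :=
    (TensorProduct.lift.equiv (.id R) Z (Localization.AtPrime p) (CharacterModule R) ≪≫ₗ
      CharacterModule.homEquiv).symm.toEquiv.subsingleton
  intro z
  have h2 : (1 : Localization.AtPrime p) ⊗ₜ[R] z = 0 := by
    by_contra hne
    have hne' : (z ⊗ₜ[R] (1 : Localization.AtPrime p)) ⊗ₜ[R] (1 : R) ≠ 0 := by
      intro h0
      have := congrArg ((TensorProduct.rid R _ ≪≫ₗ TensorProduct.comm R _ _)) h0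
      rw [map_zero, LinearEquiv.trans_apply, TensorProduct.rid_tmul, one_smul,
        TensorProduct.comm_tmul] at this
      exact hne this
    obtain ⟨c, hc⟩ := CharacterModule.exists_character_apply_ne_zero_of_ne_zero hne'
    rw [Subsingleton.elim c 0] at hc
    exact hc rfl
  have h3 : TensorProduct.mk R (Localization.AtPrime p) Z 1 z = 0 := h2
  rw [IsLocalizedModule.eq_zero_iff p.primeCompl] at h3
  obtain ⟨s, hs⟩ := h3
  exact ⟨s, s.2, hs⟩

variable {C : Type u} [AddCommGroup C] [Module R C] [IsNoetherianRing R]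

/-- The dual Bass numbers of `Hom(C, N)`, for `N` of injective dimension at most `n`, are
concentrated in degrees `i` with `i ≤ ht p ≤ i + n`. -/
lemma SD.window (hC : SD R C) (p : Ideal R) [p.IsPrime]
    (hp : ∀ i : ℕ, (i : ℕ∞) ≠ primeHeight R p → LV C p i (R ⧸ p)) (n : ℕ) :
    ∀ (N : Type u) [AddCommGroup N] [Module R N], IdLE (R := R) n N → Cotor (R := R) (C →ₗ[R] N) →
      ∀ i : ℕ, ¬((i : ℕ∞) ≤ primeHeight R p ∧ primeHeight R p ≤ (i : ℕ∞) + (n : ℕ∞)) →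
        Subsingleton (E R (Localization.AtPrime p →ₗ[R] C →ₗ[R] N) (CharacterModule (R ⧸ p)) i) := by
  have hBflat : Module.Flat R (Localization.AtPrime p) := inferInstance
  have base : ∀ (I : Type u) [AddCommGroup I] [Module R I] [Module.Injective R I] (i : ℕ),
      (i : ℕ∞) ≠ primeHeight R p → Subsingleton
        (E R (Localization.AtPrime p →ₗ[R] C →ₗ[R] I) (CharacterModule (R ⧸ p)) i) := by
    intro I _ _ _ i hi
    have := injective_hom (R := R) (Localization.AtPrime p) I
    have h := (tor_hom_iff (J := Localization.AtPrime p →ₗ[R] I) C i (R ⧸ p)).2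
      (subsingleton_hom_of_tors p (hp i hi) I)
    exact (preEquiv (flipEquiv (Localization.AtPrime p) C I) _ i).symm.toEquiv.subsingleton
  induction n with
  | zero =>
    intro N _ _ hN _ i hi
    have := hN.injective
    refine base N i fun h ↦ hi ⟨h.le, ?_⟩
    rw [h]
    exact le_self_add
  | succ n ih =>
    intro N _ _ hN hcot i hi
    obtain ⟨I, _, _, f, _, hf⟩ := exists_inj_embed R N
    have hs := SES.ofInj hf
    have hN' := hN.cosyzygy hs
    have hs2 := hC.pc_ses hs (hC.bass_zero I).1 (hC.bass n _ hN').1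
    have hcot' : Cotor (R := R) (C →ₗ[R] (I ⧸ LinearMap.range f)) := fun F _ _ hF ↦
      hs2.sub_right' (flat_ext_hom_inj F C I) (hcot.two F hF)
    have hs3 := Cotor.hom_ses (Localization.AtPrime p) hs2 hcot
    refine hs3.sub_left (base I i fun h ↦ hi ⟨h.le, ?_⟩) (ih _ hN' hcot' (i + 1) fun h ↦ hi ?_)
    · rw [h]
      exact le_self_add
    · obtain ⟨h1, h2⟩ := h
      push_cast at h1 h2 ⊢
      refine ⟨le_self_add.trans h1, h2.trans_eq ?_⟩
      ring

end Window

end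

end DualBass

/-! ### Localization of `Ext` and finite injective dimension -/

namespace DualBass

noncomputable section

open scoped TensorProduct

section Loc

variable {R : Type u} [CommRing R] (S : Submonoid R)
variable {A B X Y N C : Type u} [AddCommGroup A] [Module R A] [AddCommGroup B] [Module R B]
  [AddCommGroup X] [Module R X] [AddCommGroup Y] [Module R Y] [AddCommGroup N] [Module R N]
  [AddCommGroup C] [Module R C]

lemma loc_comp (g : B →ₗ[R] X) (f : A →ₗ[R] B) :
    LocalizedModule.map S (g ∘ₗ f) = LocalizedModule.map S g ∘ₗ LocalizedModule.map S f := by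
  ext x
  induction x using LocalizedModule.induction_on with
  | _ m s => simp

lemma SES.loc {f : A →ₗ[R] B} {g : B →ₗ[R] X} (h : SES f g) :
    SES (LocalizedModule.map S f) (LocalizedModule.map S g) :=
  ⟨LocalizedModule.map_injective S f h.inj, LocalizedModule.map_surjective S g h.surj,
    LocalizedModule.map_exact S f g h.exact⟩

lemma loc_hom_surj [Module.FinitePresentation R A]
    (φ : LocalizedModule S A →ₗ[Localization S] LocalizedModule S B) :
    ∃ (ψ : A →ₗ[R] B) (s : S), s • φ = LocalizedModule.map S ψ := by
  obtain ⟨⟨ψ, s⟩, h⟩ := IsLocalizedModule.surj S (LocalizedModule.map S (M := A) (N := B)) φ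
  exact ⟨ψ, s, h⟩

lemma loc_hom_eq [Module.FinitePresentation R A] {φ ψ : A →ₗ[R] B}
    (h : LocalizedModule.map S φ = LocalizedModule.map S ψ) : ∃ s : S, s • φ = s • ψ :=
  IsLocalizedModule.exists_of_eq (S := S) (f := LocalizedModule.map S (M := A) (N := B)) h

lemma loc_smul_inj (s : S) {φ ψ : LocalizedModule S A →ₗ[Localization S] LocalizedModule S B}
    (h : s • φ = s • ψ) : φ = ψ := by
  ext x
  exact IsLocalizedModule.smul_injective (LocalizedModule.mkLinearMap S B) s
    (LinearMap.congr_fun h x)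

instance loc_finite [Module.Finite R A] : Module.Finite (Localization S) (LocalizedModule S A) :=
  Module.Finite.of_isLocalizedModule S (LocalizedModule.mkLinearMap S A)

lemma loc_projective [Module.Projective R A] :
    Module.Projective (Localization S) (LocalizedModule S A) :=
  Module.projective_of_isLocalizedModule S (LocalizedModule.mkLinearMap S A)

/-- For finitely generated modules over a Noetherian ring, `Ext` commutes with localization; only
the vanishing is recorded. -/
lemma loc_ext [IsNoetherianRing R] (n : ℕ) [Module.Finite R N] :
    Subsingleton (E (Localization S) (LocalizedModule S N) (LocalizedModule S C) (n + 1)) ↔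
      IsTors S (E R N C (n + 1)) := by
  induction n generalizing N with
  | zero =>
    obtain ⟨P, _, _, g, _, _, hg⟩ := exists_fin_cover R N
    have hs := SES.ofSurj hg
    have := loc_projective S (A := P)
    have : Module.FinitePresentation R (LinearMap.ker g) :=
      Module.finitePresentation_of_finite R _
    have : Module.FinitePresentation R P := Module.finitePresentation_of_finite R _
    rw [(hs.loc S).sub_one_iff inferInstance]
    obtain ⟨δ, a, b⟩ := hs.ext_one C
    constructor
    · intro H x
      obtain ⟨φ, rfl⟩ := (b x).1 (Subsingleton.elim _ _)
      obtain ⟨Ψ, hΨ⟩ := H (LocalizedModule.map S φ)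
      obtain ⟨ψ, s, hs⟩ := loc_hom_surj S Ψ
      obtain ⟨t, ht⟩ := loc_hom_eq S (φ := ψ ∘ₗ (LinearMap.ker g).subtype) (ψ := s • φ) (by
        rw [loc_comp, ← hs]
        change _ = LocalizedModule.map S ((s : R) • φ)
        rw [map_smul, ← hΨ]
        rfl)
      refine ⟨(t * s : S), (t * s).2, ?_⟩
      rw [← map_smul, a]
      refine ⟨(t : R) • ψ, ?_⟩
      rw [LinearMap.smul_comp, Submonoid.coe_mul, mul_smul]
      exact ht
    · intro H Φ
      obtain ⟨φ, s, hs⟩ := loc_hom_surj S Φ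
      obtain ⟨t, ht, h⟩ := H (δ φ)
      rw [← map_smul, a] at h
      obtain ⟨ψ, hψ⟩ := h
      have hu : IsUnit (algebraMap R (Localization S) ((⟨t, ht⟩ * s : S) : R)) :=
        IsLocalization.map_units _ _
      obtain ⟨v, hv⟩ := hu
      refine ⟨(↑v⁻¹ : Localization S) • LocalizedModule.map S ψ, ?_⟩
      rw [LinearMap.smul_comp, ← loc_comp, hψ, map_smul, ← hs]
      have : t • s • Φ = (v : Localization S) • Φ := by
        rw [hv, algebraMap_smul, Submonoid.coe_mul, mul_smul]
        rfl
      rw [this, smul_smul, Units.inv_mul, one_smul]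
  | succ n ih =>
    obtain ⟨P, _, _, g, _, _, hg⟩ := exists_fin_cover R N
    have hs := SES.ofSurj hg
    have := loc_projective S (A := P)
    obtain ⟨e⟩ := hs.shift (Y := C) (n := n) inferInstance inferInstance
    obtain ⟨e'⟩ := (hs.loc S).shift (Y := LocalizedModule S C) (n := n) inferInstance inferInstance
    rw [← isTors_congr e, ← ih]
    exact ⟨fun _ ↦ e'.toEquiv.subsingleton, fun _ ↦ e'.symm.toEquiv.subsingleton⟩

lemma SD.loc [IsNoetherianRing R] (hC : SD R C) :
    SD (Localization S) (LocalizedModule S C) := by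
  have := hC.fin
  have : Module.FinitePresentation R C := Module.finitePresentation_of_finite R _
  have key (r : R) : LocalizedModule.map S (r • (LinearMap.id : C →ₗ[R] C)) =
      algebraMap R (Localization S) r • LinearMap.id := by
    rw [map_smul, LocalizedModule.map_id, algebraMap_smul]
  refine ⟨inferInstance, ⟨?_, ?_⟩, fun i ↦ ?_⟩
  · suffices H : ∀ d : Localization S,
        d • (LinearMap.id : LocalizedModule S C →ₗ[Localization S] _) = 0 → d = 0 by
      intro b c hbc
      refine sub_eq_zero.1 (H _ ?_)
      ext x
      have := LinearMap.congr_fun hbc x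
      simp only [LinearMap.smul_apply, LinearMap.id_apply, LinearMap.zero_apply] at this ⊢
      rw [sub_smul, this, sub_self]
    intro d hd'
    obtain ⟨⟨r, s⟩, hrs⟩ := IsLocalization.surj S d
    obtain ⟨t, ht⟩ := loc_hom_eq S (φ := r • (LinearMap.id : C →ₗ[R] C)) (ψ := 0) (by
      rw [key, map_zero, ← hrs, mul_comm, mul_smul, hd', smul_zero])
    rw [smul_zero] at ht
    have h0 : (t : R) * r = 0 := hC.bij.1 (by
      change ((t : R) * r) • _ = (0 : R) • _
      rw [mul_smul, zero_smul]
      exact ht)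
    have hr : algebraMap R (Localization S) r = 0 :=
      (IsLocalization.map_eq_zero_iff S _ r).2 ⟨t, h0⟩
    rw [hr] at hrs
    exact (IsLocalization.map_units _ s).mul_left_eq_zero.1 hrs
  · intro Φ
    obtain ⟨φ, s, hs⟩ := loc_hom_surj S Φ
    obtain ⟨r, rfl⟩ := hC.bij.2 φ
    refine ⟨IsLocalization.mk' _ r s, loc_smul_inj S s ?_⟩
    rw [hs, key]
    ext x
    change (s : R) • (IsLocalization.mk' (Localization S) r s • x) = algebraMap R (Localization S) r • x
    rw [← algebraMap_smul (Localization S) (s : R), smul_smul, IsLocalization.mk'_spec']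
  · rw [loc_ext]
    have := hC.ext i
    exact .of_subsingleton S

/-- Baer's criterion for injective dimension: it suffices to test cyclic modules. -/
lemma IdLE.of_cyclic (n : ℕ) : ∀ (X : Type u) [AddCommGroup X] [Module R X],
    (∀ (J : Ideal R) (j : ℕ), n ≤ j → Subsingleton (E R (R ⧸ J) X (j + 1))) →
    IdLE (R := R) n X := by
  induction n with
  | zero =>
    intro X _ _ h L _ _ j _
    have : Module.Injective R X := by
      refine Module.Baer.iff_injective.1 fun J φ ↦ ?_
      obtain ⟨ψ, hψ⟩ := ((SES.ofSub J).sub_one_iff (Y := X) inferInstance).1 (h J 0 le_rfl) φ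
      exact ⟨ψ, fun x hx ↦ LinearMap.congr_fun hψ ⟨x, hx⟩⟩
    infer_instance
  | succ n ih =>
    intro X _ _ h L _ _ j hj
    obtain ⟨I, _, _, f, _, hf⟩ := exists_inj_embed R X
    have hs := SES.ofInj hf
    obtain ⟨j, rfl⟩ := Nat.exists_eq_succ_of_ne_zero (Nat.ne_zero_of_lt hj)
    have := ih (I ⧸ LinearMap.range f) (fun J k hk ↦ by
      have := h J (k + 1) (by lia)
      exact hs.sub_right' inferInstance this) L j (by lia)
    exact hs.sub_left' this inferInstance

/-- The localization has injective dimension at most `n` as soon as the localized `Ext` modules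
vanish in degrees above `n`. -/
lemma IdLE.loc [IsNoetherianRing R] {n : ℕ}
    (h : ∀ (N : Type u) [AddCommGroup N] [Module R N] [Module.Finite R N] (j : ℕ), n ≤ j →
      IsTors S (E R N C (j + 1))) : IdLE (R := Localization S) n (LocalizedModule S C) := by
  refine IdLE.of_cyclic n _ fun J j hj ↦ ?_
  let J' := J.comap (algebraMap R (Localization S))
  have h1 := (loc_ext S j).2 (h (R ⧸ J') j hj)
  have hJ : Submodule.localized' (Localization S) S (Algebra.linearMap R _) J' = J := by
    rw [Ideal.localized'_eq_map, IsLocalization.map_under S]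
  let e := (IsLocalizedModule.iso S (Submodule.toLocalizedQuotient' (N := Localization S)
    (Localization S) S (Algebra.linearMap R (Localization S)) (M := R) J')).extendScalarsOfIsLocalization S (Localization S)
  exact (preEquiv ((Submodule.quotEquivOfEq _ _ hJ.symm).trans e.symm) _ _).symm.toEquiv.subsingleton

end Loc

end

end DualBass

/-! ### The two implications -/

namespace DualBass

noncomputable section

open scoped TensorProduct

section Final

variable {R : Type u} [CommRing R]

lemma injDim_le_iff (n : ℕ) (X : Type u) [AddCommGroup X] [Module R X] :
    injDim R X ≤ n ↔ IdLE (R := R) n X := by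
  constructor
  · intro h L _ _ j hj
    have hmem : injDim R X ∈ {n : ℕ∞ | ∀ (N : Type u) (_ : AddCommGroup N) (_ : Module R N) (i : ℕ),
        n < i → Subsingleton (extM R N X i)} :=
      csInf_mem ⟨⊤, fun N _ _ i hi ↦ absurd hi not_top_lt⟩
    refine (extM_subsingleton_iff j).1 (hmem L _ _ (j + 1) (h.trans_lt ?_))
    exact_mod_cast Nat.lt_succ_of_le hj
  · intro h
    refine sInf_le fun L _ _ i hi ↦ ?_
    obtain ⟨j, rfl⟩ := Nat.exists_eq_succ_of_ne_zero (Nat.ne_zero_of_lt (Nat.cast_lt.1 hi))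
    exact (extM_subsingleton_iff j).2 (h L j (Nat.le_of_lt_succ (Nat.cast_lt.1 hi)))

lemma isCotorsion_iff (M : Type u) [AddCommGroup M] [Module R M] :
    IsCotorsion R M ↔ Cotor (R := R) M :=
  ⟨fun h F _ _ hF ↦ (extM_subsingleton_iff 0).1 (h F _ _ hF),
    fun h F _ _ hF ↦ (extM_subsingleton_iff 0).2 (h F hF)⟩

variable [IsNoetherianRing R] {C : Type u} [AddCommGroup C] [Module R C]

/-- If `C` has finite injective dimension locally at a prime `m ⊇ p`, then `Ext^i(R/p, C)`
vanishes at `p` in every degree but `ht p`. -/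
lemma SD.LV_of_dualizing (hC : SD R C) {p m : Ideal R} [p.IsPrime] [m.IsPrime] (hpm : p ≤ m)
    {n : ℕ} (h : IdLE (R := Localization.AtPrime m) n (LocalizedModule m.primeCompl C)) {i : ℕ}
    (hi : (i : ℕ∞) ≠ primeHeight R p) : LV C p i (R ⧸ p) := by
  refine hC.LV_of_ne (b := n) (fun j hj ↦ LV.mono hpm ?_) hi
  obtain ⟨j, rfl⟩ := Nat.exists_eq_succ_of_ne_zero (Nat.ne_zero_of_lt hj)
  exact (loc_ext m.primeCompl j).1 (h _ j (Nat.le_of_lt_succ hj))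

/-- If `Ext^i(R/m, C)` is concentrated at `m` in degree `ht m`, then `C_m` is dualizing. -/
lemma SD.dualizing_of_LV (hC : SD R C) (m : Ideal R) [m.IsPrime]
    (h : ∀ i : ℕ, (i : ℕ∞) ≠ primeHeight R m → LV C m i (R ⧸ m)) :
    IsDualizing (Localization.AtPrime m) (LocalizedModule m.primeCompl C) := by
  have := hC.fin
  obtain ⟨d, hd⟩ := exists_primeHeight_eq m
  refine ⟨(isSemidualizing_iff _).2 (hC.loc m.primeCompl), ?_⟩
  have h1 : IdLE (R := Localization.AtPrime m) d (LocalizedModule m.primeCompl C) := by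
    refine IdLE.loc m.primeCompl fun N _ _ _ j hj ↦ LV.bounded d (fun i hi ↦ h i ?_)
      (Nat.lt_succ_of_le hj)
    rw [hd]
    exact_mod_cast hi.ne'
  exact ((injDim_le_iff d _).2 h1).trans_lt (ENat.natCast_lt_top d)

/-- Vanishing of dual Bass numbers of `M` outside the window, for `C` locally dualizing. -/
lemma SD.dualBass_window (hC : SD R C) (p : Ideal R) [p.IsPrime]
    (hp : ∀ i : ℕ, (i : ℕ∞) ≠ primeHeight R p → LV C p i (R ⧸ p)) (n : ℕ)
    (M : Type u) [AddCommGroup M] [Module R M] (hM : Cotor (R := R) M)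
    (hn : IdLE (R := R) n (C ⊗[R] M)) (i : ℕ)
    (hi : ¬((i : ℕ∞) ≤ primeHeight R p ∧ primeHeight R p ≤ (i : ℕ∞) + (n : ℕ∞))) :
    dualBassNumber R p i M = 0 := by
  rw [dualBass_eq_zero_iff]
  let e : M ≃ₗ[R] (C →ₗ[R] C ⊗[R] M) := .ofBijective _ (hC.auslander M hn)
  have := hC.window p hp n (C ⊗[R] M) hn
    (fun F _ _ hF ↦ have := hM F hF; (postEquiv e F 1).symm.toEquiv.subsingleton) i hi
  let e' : (Localization.AtPrime p →ₗ[R] M) ≃ₗ[R]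
      (Localization.AtPrime p →ₗ[R] C →ₗ[R] C ⊗[R] M) := e.congrRight
  exact (preEquiv (A := Localization.AtPrime p →ₗ[R] M)
    (B := Localization.AtPrime p →ₗ[R] C →ₗ[R] C ⊗[R] M) e' _ i).symm.toEquiv.subsingleton

/-- The test module `Hom(C, R^∨)`, with `R^∨` the character module of `R`, is cotorsion, and its
`C`-injective dimension is zero. -/
lemma SD.test (hC : SD R C) : Cotor (R := R) (C →ₗ[R] CharacterModule R) ∧
    injDim R (C ⊗[R] (C →ₗ[R] CharacterModule R)) = (0 : ℕ) := by
  have hJ : Module.Injective R (CharacterModule R) :=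
    Module.Flat.iff_characterModule_injective.1 inferInstance
  refine ⟨fun F _ _ _ ↦ flat_ext_hom_inj F C _, ?_⟩
  rw [Nat.cast_zero, ← nonpos_iff_eq_zero, ← Nat.cast_zero, injDim_le_iff]
  intro L _ _ j _
  let e : C ⊗[R] (C →ₗ[R] CharacterModule R) ≃ₗ[R] CharacterModule R :=
    TensorProduct.comm R _ _ ≪≫ₗ .ofBijective _ (hC.bass_zero (CharacterModule R)).1
  exact (postEquiv e L (j + 1)).toEquiv.subsingleton

/-- The dual Bass numbers of the test module detect where `Ext^i(R/p, C)` vanishes at `p`. -/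
lemma LV.of_dualBass (p : Ideal R) [p.IsPrime] (i : ℕ)
    (h : dualBassNumber R p i (C →ₗ[R] CharacterModule R) = 0) : LV C p i (R ⧸ p) := by
  have hJ : Module.Injective R (CharacterModule R) :=
    Module.Flat.iff_characterModule_injective.1 inferInstance
  have : Module.Flat R (Localization.AtPrime p) := IsLocalization.flat _ p.primeCompl
  have := injective_hom (R := R) (Localization.AtPrime p) (CharacterModule R)
  rw [dualBass_eq_zero_iff] at h
  refine tors_of_subsingleton_hom p
    ((tor_hom_iff (J := Localization.AtPrime p →ₗ[R] CharacterModule R) C i (R ⧸ p)).1 ?_)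
  exact (preEquiv (flipEquiv (Localization.AtPrime p) C (CharacterModule R)) _ i).toEquiv.subsingleton

end Final

end

end DualBass

/-- A semidualizing module `C` over a Noetherian ring `R` is pointwise dualizing
iff: for every cotorsion module `M` with `C`-id`_R(M) = n < ∞` and every prime `p`,
`π_i(p, M) = 0` for all `i ≥ 0` with `ht(p) ∉ {i, …, i + n}`. -/
theorem pointwiseDualizing_iff_dualBass_window (R : Type u) [CommRing R] [IsNoetherianRing R]
    (C : Type u) [AddCommGroup C] [Module R C] (hC : IsSemidualizing R C) :
    IsPointwiseDualizing R C ↔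
      ∀ (M : Type u) (_ : AddCommGroup M) (_ : Module R M), IsCotorsion R M →
        ∀ n : ℕ, injDim R (TensorProduct R C M) = (n : ℕ∞) →
          ∀ (p : Ideal R) [p.IsPrime], ∀ i : ℕ,
            ¬((i : ℕ∞) ≤ primeHeight R p ∧ primeHeight R p ≤ (i : ℕ∞) + (n : ℕ∞)) →
              dualBassNumber R p i M = 0 := by
  open DualBass in
  have hS := (isSemidualizing_iff C).1 hC
  constructor
  · rintro ⟨-, hd⟩ M _ _ hM n hn p _ i hi
    obtain ⟨m, hm, hpm⟩ := p.exists_le_maximal (Ideal.IsPrime.ne_top inferInstance)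
    have := hm.isPrime
    obtain ⟨k, hk⟩ := ENat.ne_top_iff_exists.1 (hd m hm).2.ne
    exact hS.dualBass_window p
      (fun j hj ↦ hS.LV_of_dualizing hpm ((injDim_le_iff k _).1 hk.ge) hj) n M
      ((isCotorsion_iff M).1 hM) ((injDim_le_iff n _).1 hn.le) i hi
  · refine fun H ↦ ⟨hC, fun m _ _ ↦ hS.dualizing_of_LV m fun i hi ↦ LV.of_dualBass m i ?_⟩
    -- the window for `n = 0` is the single degree `ht m`
    refine H _ _ _ ((isCotorsion_iff _).2 hS.test.1) 0 hS.test.2 m i fun h ↦ hi ?_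
    exact le_antisymm h.1 (by simpa using h.2)
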